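/- arXiv:1811.00042 — 5 statements merged into one kernel-verified Lean document; each statement's English description precedes it below -/
import Mathlib

section
/- Let R be a commutative Noetherian ring, M and N finite R-modules, and r ∈ R an element that is a non-zerodivisor on both R and M, with rN = 0. Then for every i ≥ 0 there is an isomorphism Ext^{i+1}_R(N, M) ≅ Ext^i_{R/rR}(N, M/rM). -/
open CategoryTheory IsLocalRing

/-- The length of a module, as the Krull dimension of its lattice of submodules. -/
noncomputable def mlen (R M : Type) [Ring R] [AddCommGroup M] [Module R M] : WithBot ℕ∞ :=
  Order.krullDim (Submodule R M)

/-- `extM R M N n` is `Ext^n_R(M, N)`. -/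
noncomputable def extM (R : Type) [CommRing R] (M N : Type)
    [AddCommGroup M] [Module R M] [AddCommGroup N] [Module R N] (n : ℕ) : ModuleCat R :=
  ((Ext R (ModuleCat R) n).obj (Opposite.op (ModuleCat.of R M))).obj (ModuleCat.of R N)

/-- The length of the localization `M_P` over `R_P`. -/
noncomputable def locLen (R : Type) [CommRing R] (M : Type) [AddCommGroup M] [Module R M]
    (P : PrimeSpectrum R) : WithBot ℕ∞ :=
  mlen (Localization.AtPrime P.asIdeal) (LocalizedModule P.asIdeal.primeCompl M)

/-!
Put `S = R/rR`, and let `ε ∈ Ext¹_R(M/rM, M)` be the class of `0 → M → M → M/rM → 0`. For an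
`S`-module `X`, restricting scalars and composing with `ε` gives maps
`Extⁱ_S(X, M/rM) → Extⁱ⁺¹_R(X, M)`, which are bijective by induction on `i`. For `i = 0`, use that
`r` kills `X`: hence `Hom_R(X, M) = 0` and `r` acts as zero on `Ext¹_R(X, M)`. The induction step
shifts dimensions along `0 → K → P → X → 0` with `P` projective over `S`; this works over `R` too,
because `P` is a direct summand of `L/rL` for some projective `R`-module `L`, and so has projective
dimension at most one over `R`.
-/

universe w w' v v' u u'

section CyclesInModuleCat

variable {R : Type u} [Ring R] {ι : Type*} {c : ComplexShape ι}
  (K : HomologicalComplex (ModuleCat.{v} R) c)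

theorem iCycles_injective_of_moduleCat (i : ι) : Function.Injective (K.iCycles i) :=
  (ModuleCat.mono_iff_injective _).1 inferInstance

theorem exact_iCycles_d_of_moduleCat {i j : ι} (hj : c.next i = j) :
    Function.Exact (K.iCycles i) (K.d i j) :=
  (ShortComplex.ShortExact.moduleCat_exact_iff_function_exact
    (.mk (K.iCycles i) (K.d i j) (K.iCycles_d i j))).1
    (ShortComplex.exact_of_f_is_kernel _ (K.cyclesIsKernel i j hj))

theorem exact_toCycles_homologyπ_of_moduleCat {i j : ι} (hi : c.prev j = i) :
    Function.Exact (K.toCycles i j) (K.homologyπ j) :=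
  (ShortComplex.ShortExact.moduleCat_exact_iff_function_exact
    (.mk (K.toCycles i j) (K.homologyπ j) (K.toCycles_comp_homologyπ i j))).1
    (ShortComplex.exact_of_g_is_cokernel _ (K.homologyIsCokernel i j hi))

theorem homologyπ_apply_eq_zero_iff_of_moduleCat {i j : ι} (hi : c.prev j = i) (z : K.cycles j) :
    K.homologyπ j z = 0 ↔ ∃ x, K.d i j x = K.iCycles j z := by
  refine (exact_toCycles_homologyπ_of_moduleCat K hi z).trans (exists_congr fun x ↦ ?_)
  rw [← (iCycles_injective_of_moduleCat K j).eq_iff]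
  exact Eq.congr_left (ConcreteCategory.congr_hom (K.toCycles_i i j) x)

end CyclesInModuleCat

section ComparisonWithDerivedFunctor

variable {C : Type u} [Category.{v} C] [Abelian C] {X : C} (P : ProjectiveResolution X)

theorem extMk_degree_zero_eq_zero_iff [HasExt.{w} C] {Y : C}
    (f : P.complex.X 0 ⟶ Y) (hf : P.complex.d 1 0 ≫ f = 0) : P.extMk f 1 rfl hf = 0 ↔ f = 0 := by
  refine ⟨fun h ↦ ?_, by rintro rfl; simp⟩
  have isZero : Limits.IsZero (P.cochainComplex.X 1) :=
    P.cochainComplex.isZero_of_isStrictlyLE 0 1 (by lia)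
  simp only [← P.extEquivCohomologyClass.apply_eq_iff_eq,
    ProjectiveResolution.extEquivCohomologyClass_extMk,
    ProjectiveResolution.extEquivCohomologyClass_zero,
    CochainComplex.HomComplex.CohomologyClass.mk_eq_zero_iff] at h
  rw [CochainComplex.HomComplex.Cocycle.toSingleMk_mem_coboundaries_iff _ _ _ _ _ 1 (by lia)] at h
  obtain ⟨g, hg⟩ := h
  rw [isZero.eq_of_src g 0, Limits.comp_zero] at hg
  exact (cancel_epi (P.cochainComplexXIso (-(0 : ℕ)) 0 rfl).hom).1 (by rw [← hg, Limits.comp_zero])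

variable {R : Type u'} [Ring R] [Linear R C] {Y : C}

theorem d_comp_iCycles_linearYonedaObj (n : ℕ) (z : (P.complex.linearYonedaObj R Y).cycles n) :
    P.complex.d (n + 1) n ≫
      (show P.complex.X n ⟶ Y from (P.complex.linearYonedaObj R Y).iCycles n z) = 0 :=
  ConcreteCategory.congr_hom ((P.complex.linearYonedaObj R Y).iCycles_d n (n + 1)) z

variable [HasExt.{w} C]

theorem extMk_smul (r : R) {n : ℕ} (f : P.complex.X n ⟶ Y) (m : ℕ) (hm : n + 1 = m)
    (hf : P.complex.d m n ≫ f = 0) :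
    P.extMk (r • f) m hm (by simp [hf]) = r • P.extMk f m hm hf := by
  simp [Abelian.Ext.smul_eq_comp_mk₀, ProjectiveResolution.extMk_comp_mk₀]

variable (R Y) in
/-- The linear map sending a degree `n` cocycle of the complex `Hom(P, Y)` to its class in
`Abelian.Ext X Y n`, for a projective resolution `P` of `X`. -/
noncomputable def cyclesToExt (n : ℕ) :
    (P.complex.linearYonedaObj R Y).cycles n →ₗ[R] Abelian.Ext X Y n where
  toFun z := P.extMk _ (n + 1) rfl (d_comp_iCycles_linearYonedaObj P n z)
  map_add' z z' := by
    rw [P.add_extMk]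
    congr 1
    exact map_add ((P.complex.linearYonedaObj R Y).iCycles n).hom z z'
  map_smul' r z := by
    rw [RingHom.id_apply, ← extMk_smul]
    congr 1
    exact map_smul ((P.complex.linearYonedaObj R Y).iCycles n).hom r z

theorem cyclesToExt_surjective (n : ℕ) : Function.Surjective (cyclesToExt P R Y n) := by
  intro x
  obtain ⟨f, hf, rfl⟩ := P.extMk_surjective x (n + 1) rfl
  obtain ⟨z, rfl⟩ :=
    (exact_iCycles_d_of_moduleCat (P.complex.linearYonedaObj R Y) (by simp) f).1 hf
  exact ⟨z, rfl⟩

theorem ker_homologyπ_linearYonedaObj (n : ℕ) :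
    LinearMap.ker ((P.complex.linearYonedaObj R Y).homologyπ n).hom =
      LinearMap.ker (cyclesToExt P R Y n) := by
  ext z
  have hz := d_comp_iCycles_linearYonedaObj P n z
  cases n with
  | zero =>
    refine (homologyπ_apply_eq_zero_iff_of_moduleCat _ (i := 0) (by simp) z).trans
      (Iff.trans ?_ (extMk_degree_zero_eq_zero_iff P _ hz).symm)
    rw [HomologicalComplex.shape _ 0 0 (by simp)]
    exact ⟨fun ⟨_, h⟩ ↦ h.symm, fun h ↦ ⟨0, h.symm⟩⟩
  | succ n =>
    exact (homologyπ_apply_eq_zero_iff_of_moduleCat _ (i := n) (by simp) z).trans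
      (P.extMk_eq_zero_iff _ _ rfl hz n rfl).symm

variable (R) in
/-- The `Ext` obtained by deriving `Hom(-, Y)` agrees with the `Ext` defined as morphisms in the
derived category. -/
noncomputable def extLinearEquiv [EnoughProjectives C] (X Y : C) (n : ℕ) :
    ((Ext R C n).obj (.op X)).obj Y ≃ₗ[R] Abelian.Ext X Y n :=
  let P := ProjectiveResolution.of X
  (P.isoExt n Y).toLinearEquiv ≪≫ₗ
    (LinearMap.quotKerEquivOfSurjective _
      ((ModuleCat.epi_iff_surjective _).1 inferInstance)).symm ≪≫ₗ
    Submodule.quotEquivOfEq _ _ (ker_homologyπ_linearYonedaObj P n) ≪≫ₗ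
    (cyclesToExt P R Y n).quotKerEquivOfSurjective (cyclesToExt_surjective P n)

end ComparisonWithDerivedFunctor

section DimensionShifting

open Abelian

variable {C : Type u} [Category.{v} C] [Abelian C] [HasExt.{w} C]
  {D : Type u'} [Category.{v'} D] [Abelian D] [HasExt.{w'} D]
  (F : C ⥤ D) [F.Additive] [Limits.PreservesFiniteLimits F] [Limits.PreservesFiniteColimits F]
  {Y : C} {A : D} {d : ℕ} (ε : Ext (F.obj Y) A d)

/-- The map `x ↦ F(x) · ε` obtained by applying the exact functor `F` and then composing with a
fixed class `ε` of degree `d`. -/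
noncomputable def mapExtPostcomp (X : C) {n m : ℕ} (h : n + d = m) :
    Ext X Y n →+ Ext (F.obj X) A m :=
  (ε.postcomp (F.obj X) h).comp (F.mapExtAddHom X Y n)

theorem mapExtPostcomp_comp {X X' : C} {k n n' m m' : ℕ} (α : Ext X X' k) (x : Ext X' Y n)
    (hn : k + n = n') (hm : n + d = m) (hm' : n' + d = m') :
    mapExtPostcomp F ε X hm' (α.comp x hn) =
      (α.mapExactFunctor F).comp (mapExtPostcomp F ε X' hm x) (by lia) := by
  simpa [mapExtPostcomp, Ext.mapExactFunctor_comp] using Ext.comp_assoc _ _ _ hn hm (by lia)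

theorem mapExtPostcomp_bijective_succ {S : ShortComplex C} (hS : S.ShortExact)
    [Projective S.X₂] [HasProjectiveDimensionLE (F.obj S.X₂) d] {n m : ℕ} (h : n + d = m)
    (surjective_X₂ : Function.Surjective (mapExtPostcomp F ε S.X₂ h))
    (bijective_X₁ : Function.Bijective (mapExtPostcomp F ε S.X₁ h)) :
    Function.Bijective (mapExtPostcomp F ε S.X₃ (show n + 1 + d = m + 1 by lia)) := by
  have vanishing (y : Ext (F.obj S.X₂) A (m + 1)) : y = 0 :=
    y.eq_zero_of_hasProjectiveDimensionLT (d + 1) (by lia)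
  refine AddMonoidHom.bijective_of_surjective_of_bijective_of_right_exact _ _ _ _
    (mapExtPostcomp F ε S.X₂ h) (mapExtPostcomp F ε S.X₁ h) _ ?_ ?_
    ((ShortComplex.ab_exact_iff_function_exact _).1
      (Ext.contravariant_sequence_exact₁' hS Y n (n + 1) (add_comm 1 n)))
    ((ShortComplex.ab_exact_iff_function_exact _).1
      (Ext.contravariant_sequence_exact₁' (hS.map_of_exact F) A m (m + 1) (add_comm 1 m)))
    surjective_X₂ bijective_X₁
    (fun x ↦ Ext.contravariant_sequence_exact₃ hS Y x (Ext.eq_zero_of_projective _) (add_comm 1 n))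
    (fun y ↦ Ext.contravariant_sequence_exact₃ (hS.map_of_exact F) A y (vanishing _) (add_comm 1 m))
  · ext x
    have commutes := mapExtPostcomp_comp F ε (Ext.mk₀ S.f) x (zero_add n) h h
    rw [Ext.mapExactFunctor_mk₀] at commutes
    exact commutes.symm
  · ext x
    have commutes := mapExtPostcomp_comp F ε hS.extClass x (add_comm 1 n) h
      (show n + 1 + d = m + 1 by lia)
    rw [Ext.mapExactFunctor_extClass] at commutes
    exact commutes.symm

theorem mapExtPostcomp_zero_bijective [F.Full] [F.Faithful] {X : C}
    (hε : Function.Bijective (ε.postcomp (F.obj X) (zero_add d))) :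
    Function.Bijective (mapExtPostcomp F ε X (zero_add d)) := by
  refine hε.comp ?_
  rw [Functor.mapExtAddHom_coe, Ext.mapExactFunctor₀]
  simpa using! ⟨F.map_injective, F.map_surjective⟩

theorem mapExtPostcomp_bijective [F.Full] [F.Faithful] [EnoughProjectives C]
    (hε : ∀ X, Function.Bijective (ε.postcomp (F.obj X) (zero_add d)))
    (hF : ∀ (P : C) [Projective P], HasProjectiveDimensionLE (F.obj P) d)
    (X : C) {n m : ℕ} (h : n + d = m) : Function.Bijective (mapExtPostcomp F ε X h) := by
  induction n generalizing X m with
  | zero =>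
    obtain rfl := (zero_add d).symm.trans h
    exact mapExtPostcomp_zero_bijective F ε (hε X)
  | succ n ih =>
    obtain rfl : m = n + d + 1 := by lia
    obtain ⟨P⟩ := EnoughProjectives.presentation X
    let S := ShortComplex.mk _ _ (Limits.kernel.condition P.f)
    have hS : S.ShortExact := { exact := ShortComplex.exact_kernel P.f }
    have : Projective S.X₂ := P.projective
    have := hF S.X₂
    exact mapExtPostcomp_bijective_succ F ε hS rfl (ih P.p rfl).surjective (ih _ rfl)

end DimensionShifting

section DegreeZero

open Abelian

variable {R : Type u'} [Ring R] {C : Type u} [Category.{v} C] [Abelian C] [Linear R C]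
  [HasExt.{w} C] {r : R} {X M Q : C}

theorem smul_ext_eq_zero (hX : r • 𝟙 X = 0) {n : ℕ} (x : Ext X M n) : r • x = 0 := by
  rw [← Ext.mk₀_id_comp x, ← Ext.smul_comp, ← Ext.mk₀_smul, hX, Ext.mk₀_zero, Ext.zero_comp]

theorem postcomp_extClass_bijective_of_smul_eq_zero (hX : r • 𝟙 X = 0) {g : M ⟶ Q}
    {w : (r • 𝟙 M) ≫ g = 0} (hS : (ShortComplex.mk (r • 𝟙 M) g w).ShortExact) :
    Function.Bijective (hS.extClass.postcomp X (zero_add 1)) := by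
  have comp_smul_id {n : ℕ} (x : Ext X M n) : x.comp (Ext.mk₀ (r • 𝟙 M)) (add_zero n) = 0 := by
    rw [← Ext.smul_eq_comp_mk₀, smul_ext_eq_zero hX]
  have : Mono (r • 𝟙 M) := hS.mono_f
  have hom_eq_zero (f : Ext X M 0) : f = 0 :=
    Ext.postcomp_mk₀_injective_of_mono X (r • 𝟙 M) (by simpa using comp_smul_id f)
  refine ⟨(injective_iff_map_eq_zero _).2 fun x hx ↦ ?_, fun y ↦ ?_⟩
  · obtain ⟨f, rfl⟩ := Ext.covariant_sequence_exact₃ X hS x (zero_add 1) hx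
    rw [hom_eq_zero f, Ext.zero_comp]
  · exact Ext.covariant_sequence_exact₁ X hS y (comp_smul_id y) (zero_add 1)

end DegreeZero

section ObjectsKilledByScalar

open Abelian Limits

variable {R : Type*} [Ring R] {C : Type u} [Category.{v} C]
  {D : Type u'} [Category.{v'} D] [Abelian D] [Linear R D]
  (F : C ⥤ D) [F.Full] [F.Faithful] {r : R}

theorem smul_id_cokernel_smul_id (r : R) (A : D) :
    r • 𝟙 (cokernel (r • 𝟙 A)) = 0 := by
  rw [← cancel_epi (cokernel.π (r • 𝟙 A)), Linear.comp_smul, Category.comp_id, comp_zero]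
  have condition := cokernel.condition (r • 𝟙 A)
  rwa [Linear.smul_comp, Category.id_comp] at condition

theorem hasProjectiveDimensionLE_one_cokernel_smul_id (L : D) [Projective L] [Mono (r • 𝟙 L)] :
    HasProjectiveDimensionLE (cokernel (r • 𝟙 L)) 1 := by
  have hS : (ShortComplex.mk _ _ (cokernel.condition (r • 𝟙 L))).ShortExact :=
    { exact := ShortComplex.exact_cokernel _ }
  exact hS.hasProjectiveDimensionLT_X₃ 1 (inferInstanceAs (HasProjectiveDimensionLT L 1))
    (inferInstanceAs (HasProjectiveDimensionLT L 2))

theorem hasProjectiveDimensionLE_one_obj_of_essImage_iff [EnoughProjectives D]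
    (hF : ∀ B, F.essImage B ↔ r • 𝟙 B = 0) (mono : ∀ (L : D) [Projective L], Mono (r • 𝟙 L))
    (P : C) [Projective P] : HasProjectiveDimensionLE (F.obj P) 1 := by
  obtain ⟨L⟩ := EnoughProjectives.presentation (F.obj P)
  have := mono L.p
  have smul_id_obj : r • 𝟙 (F.obj P) = 0 := (hF _).1 (F.obj_mem_essImage P)
  obtain ⟨Q, ⟨e⟩⟩ := (hF _).2 (smul_id_cokernel_smul_id r L.p)
  let φ : cokernel (r • 𝟙 L.p) ⟶ F.obj P := cokernel.desc _ L.f (by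
    rw [Linear.smul_comp, Category.id_comp, ← Category.comp_id L.f, ← Linear.comp_smul,
      smul_id_obj, comp_zero])
  have : Epi φ := epi_of_epi_fac (cokernel.π_desc _ _ _)
  let π : Q ⟶ P := F.preimage (e.hom ≫ φ)
  have : Epi π := F.epi_of_epi_map (by rw [F.map_preimage]; infer_instance)
  let retract : Retract P Q := ⟨Projective.factorThru (𝟙 P) π, π, Projective.factorThru_comp _ _⟩
  have := hasProjectiveDimensionLE_one_cokernel_smul_id (r := r) L.p
  exact ((retract.map F).trans e.retract).hasProjectiveDimensionLT 2

theorem mapExtPostcomp_extClass_bijective [Abelian C] [F.Additive] [PreservesFiniteLimits F]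
    [PreservesFiniteColimits F] [HasExt.{w} C] [HasExt.{w'} D] [EnoughProjectives C]
    [EnoughProjectives D] (hF : ∀ B, F.essImage B ↔ r • 𝟙 B = 0)
    (mono : ∀ (L : D) [Projective L], Mono (r • 𝟙 L)) {A : D} {Y : C} {g : A ⟶ F.obj Y}
    {w : (r • 𝟙 A) ≫ g = 0} (hS : (ShortComplex.mk (r • 𝟙 A) g w).ShortExact) (X : C) (n : ℕ) :
    Function.Bijective (mapExtPostcomp F hS.extClass X (rfl : n + 1 = n + 1)) :=
  mapExtPostcomp_bijective F hS.extClass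
    (fun X ↦ postcomp_extClass_bijective_of_smul_eq_zero ((hF _).1 (F.obj_mem_essImage X)) hS)
    (fun P _ ↦ hasProjectiveDimensionLE_one_obj_of_essImage_iff F hF mono P) X rfl

end ObjectsKilledByScalar

section Modules

open scoped Pointwise

theorem restrictScalars_full_of_surjective {R : Type u} {S : Type u'} [Ring R] [Ring S]
    {f : R →+* S} (hf : Function.Surjective f) : (ModuleCat.restrictScalars.{v} f).Full where
  map_surjective g :=
    ⟨ModuleCat.ofHom
      { toFun x := g.hom x
        map_add' := map_add g.hom
        map_smul' := hf.forall.2 (map_smul g.hom) }, rfl⟩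

variable {R : Type u} [CommRing R]

/-- An `R`-module that is compatibly an `S`-module is the restriction of scalars of the latter.
The two `R`-module structures agree only propositionally. -/
noncomputable def restrictScalarsIso {S : Type u'} [CommRing S] [Algebra R S] (N : Type v)
    [AddCommGroup N] [Module R N] [Module S N] [IsScalarTower R S N] :
    (ModuleCat.restrictScalars (algebraMap R S)).obj (ModuleCat.of S N) ≅ ModuleCat.of R N :=
  letI F := ModuleCat.restrictScalars (algebraMap R S)
  LinearEquiv.toModuleIso (X₁ := F.obj (.of S N))
    (@AddEquiv.toLinearEquiv R (F.obj (.of S N)) N _ _ _ (F.obj (.of S N)).isModule _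
      (AddEquiv.refl N) fun r n ↦ algebraMap_smul S r (show N from n))

theorem essImage_restrictScalars_quotient_span_singleton_iff (r : R) (B : ModuleCat.{v} R) :
    (ModuleCat.restrictScalars (algebraMap R (R ⧸ Ideal.span {r}))).essImage B ↔ r • 𝟙 B = 0 := by
  constructor
  · rintro ⟨X, ⟨e⟩⟩
    have smul_id_obj :
        r • 𝟙 ((ModuleCat.restrictScalars (algebraMap R (R ⧸ Ideal.span {r}))).obj X) = 0 := by
      ext x
      change Ideal.Quotient.mk (Ideal.span {r}) r • (show X from x) = 0
      rw [Ideal.Quotient.eq_zero_iff_mem.2 (Ideal.mem_span_singleton_self r), zero_smul]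
    rw [← cancel_epi e.hom, Linear.comp_smul, Category.comp_id, ← Category.id_comp e.hom,
      ← Linear.smul_comp, smul_id_obj, Limits.zero_comp, Limits.comp_zero]
  · intro h
    have isTorsionBy : Module.IsTorsionBy R B r := fun b ↦ ConcreteCategory.congr_hom h b
    let := isTorsionBy.module
    have : IsScalarTower R (R ⧸ Ideal.span {r}) B := Module.IsTorsionBySet.isScalarTower _
    exact ⟨.of _ B, ⟨restrictScalarsIso B⟩⟩

theorem mono_smul_id_of_projective [Small.{v} R] {r : R} (hr : IsSMulRegular R r)
    (L : ModuleCat.{v} R) [Projective L] : Mono (r • 𝟙 L) := by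
  have : Module.Projective R L := (IsProjective.iff_projective L).2 ‹Projective L›
  exact (ModuleCat.mono_iff_injective _).2
    (Module.Flat.isSMulRegular_of_isRegular (isLeftRegular_iff_isRegular.1 hr))

theorem exists_shortExact_smul_id_restrictScalars {M : Type v} [AddCommGroup M] [Module R M] {r : R}
    (hr : IsSMulRegular M r) :
    ∃ (g : ModuleCat.of R M ⟶ (ModuleCat.restrictScalars (algebraMap R (R ⧸ Ideal.span {r}))).obj
          (.of _ (M ⧸ (Ideal.span {r} : Ideal R) • (⊤ : Submodule R M))))
      (w : (r • 𝟙 (ModuleCat.of R M)) ≫ g = 0), (ShortComplex.mk _ g w).ShortExact := by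
  have : IsScalarTower R (R ⧸ Ideal.span {r})
      (M ⧸ (Ideal.span {r} : Ideal R) • (⊤ : Submodule R M)) :=
    (Module.isTorsionBySet_quotient_ideal_smul M (Ideal.span {r})).isScalarTower
  let e : ModuleCat.of R (M ⧸ r • (⊤ : Submodule R M)) ≅ _ :=
    (Submodule.quotEquivOfEq _ _ (Submodule.ideal_span_singleton_smul r ⊤).symm).toModuleIso ≪≫
      (restrictScalarsIso (S := R ⧸ Ideal.span {r})
        (M ⧸ (Ideal.span {r} : Ideal R) • (⊤ : Submodule R M))).symm
  let S := (ModuleCat.of R M).smulShortComplex r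
  have hS : S.ShortExact := hr.smulShortComplex_shortExact
  refine ⟨S.g ≫ e.hom, (S.zero_assoc e.hom).trans Limits.zero_comp, ?_⟩
  exact ShortComplex.shortExact_of_iso
    (ShortComplex.isoMk (S₁ := S) (Iso.refl _) (Iso.refl _) e) hS

end Modules

theorem rees_lemma_general {R : Type u} [CommRing R] [Small.{v} R] {M N : Type v}
    [AddCommGroup M] [Module R M] [AddCommGroup N] [Module R N] {r : R} (hrR : IsSMulRegular R r)
    (hrM : IsSMulRegular M r) [Module (R ⧸ Ideal.span {r}) N]
    [IsScalarTower R (R ⧸ Ideal.span {r}) N] (i : ℕ) :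
    Nonempty (((Ext R (ModuleCat.{v} R) (i + 1)).obj (.op (.of R N))).obj (.of R M) ≃+
      ((Ext (R ⧸ Ideal.span {r}) (ModuleCat.{v} (R ⧸ Ideal.span {r})) i).obj (.op (.of _ N))).obj
        (.of _ (M ⧸ (Ideal.span {r} : Ideal R) • (⊤ : Submodule R M)))) := by
  let F := ModuleCat.restrictScalars.{v} (algebraMap R (R ⧸ Ideal.span {r}))
  have : F.Full := restrictScalars_full_of_surjective Ideal.Quotient.mk_surjective
  obtain ⟨g, w, hS⟩ := exists_shortExact_smul_id_restrictScalars hrM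
  let X := ModuleCat.of (R ⧸ Ideal.span {r}) N
  have bijective := mapExtPostcomp_extClass_bijective F (r := r) (A := .of R M)
    (essImage_restrictScalars_quotient_span_singleton_iff r)
    (fun L _ ↦ mono_smul_id_of_projective hrR L) hS X i
  have transport := (((Ext R (ModuleCat.{v} R) (i + 1)).mapIso
    (restrictScalarsIso (R := R) (S := R ⧸ Ideal.span {r}) N).op).app (.of R M)).toLinearEquiv
  exact ⟨transport.toAddEquiv.trans <|
    (extLinearEquiv R (F.obj X) (.of R M) (i + 1)).toAddEquiv.trans <|
    (AddEquiv.ofBijective _ bijective).symm.trans <|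
    (extLinearEquiv _ X _ i).symm.toAddEquiv⟩

/-- **Rees's lemma.** If `r` is a non-zerodivisor on `R` and on `M` and `rN = 0`, then
`Ext^{i+1}_R(N, M) ≅ Ext^i_{R/rR}(N, M/rM)` for all `i ≥ 0`. -/
theorem rees_lemma (R : Type) [CommRing R] [IsNoetherianRing R]
    (M N : Type) [AddCommGroup M] [Module R M] [AddCommGroup N] [Module R N]
    [Module.Finite R M] [Module.Finite R N]
    (r : R)
    (hrR : ∀ x : R, r * x = 0 → x = 0)
    (hrM : ∀ m : M, r • m = 0 → m = 0)
    (hrN : ∀ n : N, r • n = 0)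
    [Module (R ⧸ Ideal.span {r}) N] [IsScalarTower R (R ⧸ Ideal.span {r}) N]
    (i : ℕ) :
    Nonempty
      ((extM R N M (i + 1)) ≃+
        (extM (R ⧸ Ideal.span {r}) N
          (M ⧸ ((Ideal.span {r} : Ideal R) • (⊤ : Submodule R M))) i)) := by
  exact rees_lemma_general (.of_right_eq_zero_of_smul hrR) (.of_right_eq_zero_of_smul hrM) i
end

section
/- Let (R, m) be a 1-dimensional Noetherian local ring satisfying Serre's condition S1, with minimal primes P_1, …, P_n. Let F be a finite torsion-free R-module and r ∈ m a non-zerodivisor. Then length_R(F/rF) = Σ_i length_{R_{P_i}}(F_{P_i}) · length_R((R/P_i)/r(R/P_i)). -/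
open CategoryTheory IsLocalRing

/-! Let `r` avoid all minimal primes of `R` and write `M[r]` for the `r`-torsion of `M`. The snake
lemma for multiplication by `r` makes `ℓ(M/rM) - ℓ(M[r])` additive on short exact sequences, and
exactness of localization does the same for `∑_P ℓ(M_P) · ℓ(R/(P + rR))`. The two therefore agree on
all finite modules as soon as they agree on `R/𝔭` for every prime `𝔭`, where in dimension one:
* if `𝔭` is minimal, then `r` is regular on `R/𝔭` and only the term `P = 𝔭` survives;
* otherwise `𝔭` is maximal and all terms of the sum vanish; since `r` acts on the field `R/𝔭` as
  zero or invertibly, the difference of lengths vanishes too.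

When `F` is torsion free, `r` avoids its associated primes, so `F[r] = 0`. -/

open scoped Pointwise

section Length

variable {R : Type*} [Ring R] {M N P : Type*} [AddCommGroup M] [Module R M]
  [AddCommGroup N] [Module R N] [AddCommGroup P] [Module R P]

theorem length_eq_length_range_add_length_range_of_exact {f : M →ₗ[R] N} {g : N →ₗ[R] P}
    (hfg : Function.Exact f g) :
    Module.length R N = Module.length R f.range + Module.length R g.range := by
  rw [← hfg.linearMap_ker_eq]
  exact Module.length_eq_add_of_exact g.ker.subtype g.rangeRestrict
    (Submodule.subtype_injective _) g.surjective_rangeRestrict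
    (LinearMap.exact_iff.2 (by simp))

theorem length_le_length_add_length_of_exact {f : M →ₗ[R] N} {g : N →ₗ[R] P}
    (hfg : Function.Exact f g) :
    Module.length R N ≤ Module.length R M + Module.length R P := by
  rw [length_eq_length_range_add_length_range_of_exact hfg]
  exact add_le_add (Module.length_le_of_surjective f.rangeRestrict f.surjective_rangeRestrict)
    (Module.length_le_of_injective g.range.subtype (Submodule.subtype_injective _))

theorem length_alternating_sum_of_exact_six {M₁ M₂ M₃ M₄ M₅ M₆ : Type*}
    [AddCommGroup M₁] [Module R M₁] [AddCommGroup M₂] [Module R M₂]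
    [AddCommGroup M₃] [Module R M₃] [AddCommGroup M₄] [Module R M₄]
    [AddCommGroup M₅] [Module R M₅] [AddCommGroup M₆] [Module R M₆]
    {f₁ : M₁ →ₗ[R] M₂} {f₂ : M₂ →ₗ[R] M₃} {f₃ : M₃ →ₗ[R] M₄} {f₄ : M₄ →ₗ[R] M₅}
    {f₅ : M₅ →ₗ[R] M₆} (hf₁ : Function.Injective f₁) (h₂ : Function.Exact f₁ f₂)
    (h₃ : Function.Exact f₂ f₃) (h₄ : Function.Exact f₃ f₄) (h₅ : Function.Exact f₄ f₅)
    (hf₅ : Function.Surjective f₅) :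
    Module.length R M₁ + Module.length R M₃ + Module.length R M₅ =
      Module.length R M₂ + Module.length R M₄ + Module.length R M₆ := by
  rw [(LinearEquiv.ofInjective f₁ hf₁).length_eq,
    length_eq_length_range_add_length_range_of_exact h₂,
    length_eq_length_range_add_length_range_of_exact h₃,
    length_eq_length_range_add_length_range_of_exact h₄,
    length_eq_length_range_add_length_range_of_exact h₅,
    LinearMap.range_eq_top.2 hf₅, Module.length_top]
  ring

end Length

section MulSnake

variable {R : Type*} [CommRing R] {A B C : Type*} [AddCommGroup A] [Module R A]
  [AddCommGroup B] [Module R B] [AddCommGroup C] [Module R C] {f : A →ₗ[R] B} {g : B →ₗ[R] C}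

/-- The functoriality of `r`-torsion: the restriction of `f` to elements killed by `r`. -/
def torsionByMap (r : R) (f : A →ₗ[R] B) :
    Submodule.torsionBy R A r →ₗ[R] Submodule.torsionBy R B r :=
  f.restrict fun x (hx : r • x = 0) => show r • f x = 0 by rw [← map_smul, hx, map_zero]

theorem torsionByMap_injective (r : R) (hf : Function.Injective f) :
    Function.Injective (torsionByMap r f) :=
  fun _ _ hxy => Subtype.ext (hf (congrArg Subtype.val hxy))

theorem torsionByMap_exact (r : R) (hf : Function.Injective f) (hfg : Function.Exact f g) :
    Function.Exact (torsionByMap r f) (torsionByMap r g) := by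
  rintro ⟨b, hb : r • b = 0⟩
  constructor
  · intro hgb
    obtain ⟨a, rfl⟩ := (hfg b).1 (congrArg Subtype.val hgb)
    exact ⟨⟨a, hf (by simpa using hb)⟩, rfl⟩
  · rintro ⟨a, ha⟩
    exact Subtype.ext ((hfg b).2 ⟨a, congrArg Subtype.val ha⟩)

theorem exact_smul_mkQ (r : R) (M : Type*) [AddCommGroup M] [Module R M] :
    Function.Exact (DistribSMul.toLinearMap R M r) (r • (⊤ : Submodule R M)).mkQ :=
  fun x => by simp [Submodule.mem_smul_pointwise_iff_exists]

theorem exists_exact_torsionByMap_quotSMulTopMap (r : R) (hf : Function.Injective f)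
    (hg : Function.Surjective g) (hfg : Function.Exact f g) :
    ∃ δ : Submodule.torsionBy R C r →ₗ[R] QuotSMulTop r A,
      Function.Exact (torsionByMap r g) δ ∧ Function.Exact δ (QuotSMulTop.map r f) := by
  refine ⟨SnakeLemma.δ' (DistribSMul.toLinearMap R A r) (DistribSMul.toLinearMap R B r)
    (DistribSMul.toLinearMap R C r) f g hfg f g hfg
    (LinearMap.ext (map_smul f r)) (LinearMap.ext (map_smul g r))
    (Submodule.torsionBy R C r).subtype (LinearMap.exact_subtype_ker_map _)
    (r • (⊤ : Submodule R A)).mkQ (exact_smul_mkQ r A) hg hf, ?_, ?_⟩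
  · exact SnakeLemma.exact_δ'_right _ _ _ _ _ _ _ _ _ _ _
      (Submodule.torsionBy R B r).subtype (LinearMap.exact_subtype_ker_map _)
      _ _ _ _ _ _ _ rfl (Submodule.subtype_injective _)
  · exact SnakeLemma.exact_δ'_left _ _ _ _ _ _ _ _ _ _ _ _ _ _ _
      (r • (⊤ : Submodule R B)).mkQ (exact_smul_mkQ r B) _ _ _ rfl (Submodule.mkQ_surjective _)

theorem length_torsionBy_le_of_exact (r : R) (hf : Function.Injective f)
    (hfg : Function.Exact f g) :
    Module.length R (Submodule.torsionBy R B r) ≤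
      Module.length R (Submodule.torsionBy R A r) + Module.length R (Submodule.torsionBy R C r) :=
  length_le_length_add_length_of_exact (torsionByMap_exact r hf hfg)

theorem length_torsionBy_add_length_quotSMulTop_of_exact (r : R) (hf : Function.Injective f)
    (hg : Function.Surjective g) (hfg : Function.Exact f g) :
    Module.length R (Submodule.torsionBy R A r) + Module.length R (Submodule.torsionBy R C r) +
        Module.length R (QuotSMulTop r B) =
      Module.length R (Submodule.torsionBy R B r) + Module.length R (QuotSMulTop r A) +
        Module.length R (QuotSMulTop r C) := by
  obtain ⟨δ, hgδ, hδf⟩ := exists_exact_torsionByMap_quotSMulTopMap r hf hg hfg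
  exact length_alternating_sum_of_exact_six (torsionByMap_injective r hf)
    (torsionByMap_exact r hf hfg) hgδ hδf (QuotSMulTop.map_exact r hfg hg)
    (QuotSMulTop.map_surjective r hg)

end MulSnake

section Localization

variable {R : Type*} [CommRing R] (S : Submonoid R)

theorem length_localizedModule_of_exact {A B C : Type*} [AddCommGroup A] [Module R A]
    [AddCommGroup B] [Module R B] [AddCommGroup C] [Module R C] {f : A →ₗ[R] B} {g : B →ₗ[R] C}
    (hf : Function.Injective f) (hg : Function.Surjective g) (hfg : Function.Exact f g) :
    Module.length (Localization S) (LocalizedModule S B) =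
      Module.length (Localization S) (LocalizedModule S A) +
        Module.length (Localization S) (LocalizedModule S C) :=
  Module.length_eq_add_of_exact (LocalizedModule.map S f) (LocalizedModule.map S g)
    (LocalizedModule.map_injective _ _ hf) (LocalizedModule.map_surjective _ _ hg)
    (LocalizedModule.map_exact _ _ _ hfg)

theorem length_localizedModule_congr {M N : Type*} [AddCommGroup M] [Module R M]
    [AddCommGroup N] [Module R N] (e : M ≃ₗ[R] N) :
    Module.length (Localization S) (LocalizedModule S M) =
      Module.length (Localization S) (LocalizedModule S N) :=
  (LinearEquiv.ofBijective (LocalizedModule.map S e.toLinearMap)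
    ⟨LocalizedModule.map_injective _ _ e.injective,
      LocalizedModule.map_surjective _ _ e.surjective⟩).length_eq

theorem mem_support_quotient_iff {I : Ideal R} {P : PrimeSpectrum R} :
    P ∈ Module.support R (R ⧸ I) ↔ I ≤ P.asIdeal := by
  simp [Module.support_of_algebra]

theorem length_localizedModule_quotient_self (P : Ideal R) [P.IsPrime] :
    Module.length (Localization.AtPrime P) (LocalizedModule P.primeCompl (R ⧸ P)) = 1 := by
  rw [Module.length_eq_one_iff, isSimpleModule_iff_toSpanSingleton_surjective]
  constructor
  · exact Module.mem_support_iff.1 ((mem_support_quotient_iff (P := ⟨P, ‹_›⟩)).2 le_rfl)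
  · intro x hx y
    induction x using LocalizedModule.induction_on with | _ x s
    induction y using LocalizedModule.induction_on with | _ y t
    obtain ⟨a, rfl⟩ := Ideal.Quotient.mk_surjective x
    obtain ⟨b, rfl⟩ := Ideal.Quotient.mk_surjective y
    have ha : a ∈ P.primeCompl := fun ha => hx (by
      rw [Ideal.Quotient.eq_zero_iff_mem.2 ha, LocalizedModule.zero_mk])
    refine ⟨Localization.mk (b * s) (t * ⟨a, ha⟩), ?_⟩
    rw [LinearMap.toSpanSingleton_apply, LocalizedModule.mk_smul_mk, LocalizedModule.mk_eq]
    refine ⟨1, ?_⟩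
    simp only [one_smul, Submonoid.smul_def, Submonoid.coe_mul, Algebra.smul_def,
      Ideal.Quotient.algebraMap_eq, map_mul]
    ring

end Localization

section TorsionBy

variable {R : Type*} [CommRing R] {M : Type*} [AddCommGroup M] [Module R M] {r : R}

theorem length_quotSMulTop_quotient (r : R) (I : Ideal R) :
    Module.length R (QuotSMulTop r (R ⧸ I)) = Module.length R (R ⧸ (I ⊔ Ideal.span {r})) := by
  have hr : r • (⊤ : Submodule R (R ⧸ I)) = Submodule.map I.mkQ (Ideal.span {r}) := by
    rw [← Submodule.ideal_span_singleton_smul, ← Submodule.range_mkQ I, ← Submodule.map_top,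
      ← Submodule.map_smul'', smul_eq_mul, Ideal.mul_top]
  exact (Submodule.quotEquivOfEq _ _ hr ≪≫ₗ
    Submodule.quotientQuotientEquivQuotientSup I (Ideal.span {r})).length_eq

theorem length_quotSMulTop_of_isTorsionBy (hM : Module.IsTorsionBy R M r) :
    Module.length R (QuotSMulTop r M) = Module.length R M := by
  have hr : r • (⊤ : Submodule R M) = ⊥ :=
    (Submodule.eq_bot_iff _).2 fun x hx => by
      obtain ⟨y, -, rfl⟩ := (Submodule.mem_smul_pointwise_iff_exists _ _ _).1 hx
      exact hM (x := y)
  exact (Submodule.quotEquivOfEqBot _ hr).length_eq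

theorem length_torsionBy_of_isTorsionBy (hM : Module.IsTorsionBy R M r) :
    Module.length R (Submodule.torsionBy R M r) = Module.length R M := by
  rw [(Module.isTorsionBy_iff_torsionBy_eq_top r).1 @hM, Module.length_top]

theorem length_torsionBy_of_isSMulRegular (hr : IsSMulRegular M r) :
    Module.length R (Submodule.torsionBy R M r) = 0 := by
  rw [(isSMulRegular_iff_torsionBy_eq_bot M r).1 hr, Module.length_bot]

theorem isTorsionBy_quotient_of_mem {I : Ideal R} (hr : r ∈ I) :
    Module.IsTorsionBy R (R ⧸ I) r := by
  rintro ⟨x⟩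
  exact Ideal.Quotient.eq_zero_iff_mem.2 (I.mul_mem_right x hr)

theorem isSMulRegular_quotient_of_notMem {P : Ideal R} [P.IsPrime] (hr : r ∉ P) :
    IsSMulRegular (R ⧸ P) r := by
  rw [isSMulRegular_iff_right_eq_zero_of_smul]
  rintro ⟨x⟩ hx
  exact Ideal.Quotient.eq_zero_iff_mem.2
    ((Ideal.IsPrime.mem_or_mem ‹_› (Ideal.Quotient.eq_zero_iff_mem.1 hx)).resolve_left hr)

theorem isSMulRegular_of_forall_notMem_associatedPrimes [IsNoetherianRing R]
    (hr : ∀ P ∈ associatedPrimes R M, r ∉ P) : IsSMulRegular M r := by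
  have hmem : r ∈ (⋃ P ∈ associatedPrimes R M, (P : Set R))ᶜ := by simpa using hr
  rw [biUnion_associatedPrimes_eq_compl_regular, compl_compl] at hmem
  exact hmem

end TorsionBy

section Multiplicity

variable {R : Type*} [CommRing R] {M : Type*} [AddCommGroup M] [Module R M] {r : R}

/-- The multiplicity of `M` along `r` as computed from its generic lengths, i.e. the sum
`∑_P ℓ(M_P) · ℓ(R / (P + rR))` over the minimal primes `P` of `R`. By the convention for `finsum` it
is `0` if infinitely many terms are nonzero, which cannot happen when `R` is Noetherian. -/
noncomputable def genericMultiplicity (r : R) (M : Type*) [AddCommGroup M] [Module R M] : ℕ∞ :=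
  ∑ᶠ P ∈ {P : PrimeSpectrum R | P.asIdeal ∈ minimalPrimes R},
    Module.length (Localization.AtPrime P.asIdeal) (LocalizedModule P.asIdeal.primeCompl M) *
      Module.length R (R ⧸ (P.asIdeal ⊔ Ideal.span {r}))

variable (R) in
theorem finite_setOf_asIdeal_mem_minimalPrimes [IsNoetherianRing R] :
    {P : PrimeSpectrum R | P.asIdeal ∈ minimalPrimes R}.Finite :=
  (minimalPrimes.finite_of_isNoetherianRing R).preimage fun _ _ _ _ => PrimeSpectrum.ext

theorem genericMultiplicity_of_exact [IsNoetherianRing R] {A B C : Type*} [AddCommGroup A]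
    [Module R A] [AddCommGroup B] [Module R B] [AddCommGroup C] [Module R C]
    {f : A →ₗ[R] B} {g : B →ₗ[R] C} (hf : Function.Injective f) (hg : Function.Surjective g)
    (hfg : Function.Exact f g) :
    genericMultiplicity r B = genericMultiplicity r A + genericMultiplicity r C := by
  simp only [genericMultiplicity, length_localizedModule_of_exact _ hf hg hfg, add_mul]
  exact finsum_mem_add_distrib (finite_setOf_asIdeal_mem_minimalPrimes R)

theorem genericMultiplicity_congr {N : Type*} [AddCommGroup N] [Module R N] (e : M ≃ₗ[R] N) :
    genericMultiplicity r M = genericMultiplicity r N := by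
  simp only [genericMultiplicity, length_localizedModule_congr _ e]

theorem genericMultiplicity_eq_zero
    (hM : ∀ P ∈ Module.support R M, P.asIdeal ∉ minimalPrimes R) :
    genericMultiplicity r M = 0 :=
  finsum_mem_eq_zero_of_forall_eq_zero fun P hP => by
    rw [Module.length_eq_zero_iff.2 (Module.notMem_support_iff.1 fun h => hM P h hP), zero_mul]

theorem genericMultiplicity_quotient_of_mem_minimalPrimes {P : PrimeSpectrum R}
    (hP : P.asIdeal ∈ minimalPrimes R) :
    genericMultiplicity r (R ⧸ P.asIdeal) =
      Module.length R (R ⧸ (P.asIdeal ⊔ Ideal.span {r})) := by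
  have hzero : ∀ Q : PrimeSpectrum R, Q ≠ P → Q.asIdeal ∈ minimalPrimes R →
      Module.length (Localization.AtPrime Q.asIdeal)
        (LocalizedModule Q.asIdeal.primeCompl (R ⧸ P.asIdeal)) = 0 := by
    intro Q hQP hQ
    rw [Module.length_eq_zero_iff, ← Module.notMem_support_iff, mem_support_quotient_iff]
    exact fun hPQ => hQP (PrimeSpectrum.ext ((hQ.2 hP.1 hPQ).antisymm hPQ))
  classical
  rw [genericMultiplicity, finsum_eq_single _ P fun Q hQP => ?_]
  · refine finsum_eq_if.trans ((if_pos hP).trans ?_)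
    rw [length_localizedModule_quotient_self, one_mul]
  · rw [finsum_eq_if]
    split_ifs with hQ
    · rw [hzero Q hQP hQ, zero_mul]
    · rfl

theorem genericMultiplicity_eq_zero_of_isTorsionBy (hr : ∀ P ∈ minimalPrimes R, r ∉ P)
    (hM : Module.IsTorsionBy R M r) : genericMultiplicity r M = 0 :=
  genericMultiplicity_eq_zero fun _ hPM hP =>
    hr _ hP (Module.annihilator_le_of_mem_support hPM (Module.mem_annihilator.2 hM))

end Multiplicity

section DimensionOne

variable {R : Type*} [CommRing R] [Ring.KrullDimLE 1 R] {r : R}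

theorem length_quotSMulTop_quotient_eq_genericMultiplicity {P : PrimeSpectrum R}
    (hrP : r ∉ P.asIdeal) :
    Module.length R (QuotSMulTop r (R ⧸ P.asIdeal)) = genericMultiplicity r (R ⧸ P.asIdeal) := by
  rw [length_quotSMulTop_quotient]
  rcases em (P.asIdeal ∈ minimalPrimes R) with hP | hP
  · rw [genericMultiplicity_quotient_of_mem_minimalPrimes hP]
  · have hmax : P.asIdeal.IsMaximal :=
      (Ring.krullDimLE_one_iff.1 ‹_› _ P.isPrime).resolve_left hP
    have htop : P.asIdeal ⊔ Ideal.span {r} = ⊤ :=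
      hmax.out.2 _ (left_lt_sup.2 (by simpa [Ideal.span_singleton_le_iff_mem] using hrP))
    have hsupp : ∀ Q ∈ Module.support R (R ⧸ P.asIdeal), Q.asIdeal ∉ minimalPrimes R :=
      fun Q hQ hQmin => hP (by
        rwa [hmax.eq_of_le Q.isPrime.ne_top (mem_support_quotient_iff.1 hQ)])
    rw [htop, genericMultiplicity_eq_zero hsupp, Module.length_eq_zero]

variable [IsNoetherianRing R]

theorem length_torsionBy_ne_top (hr : ∀ P ∈ minimalPrimes R, r ∉ P)
    (M : Type*) [AddCommGroup M] [Module R M] [hM : Module.Finite R M] :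
    Module.length R (Submodule.torsionBy R M r) ≠ ⊤ := by
  induction hM using IsNoetherianRing.induction_on_isQuotientEquivQuotientPrime R with
  | subsingleton N => simp [Module.length_eq_zero]
  | quotient N P e =>
    by_cases hrP : r ∈ P.asIdeal
    · have hmax : P.asIdeal.IsMaximal :=
        (Ring.krullDimLE_one_iff.1 ‹_› _ P.isPrime).resolve_left fun hP => hr _ hP hrP
      have : IsSimpleModule R (R ⧸ P.asIdeal) := isSimpleModule_iff_isCoatom.2 hmax.out
      refine ne_top_of_le_ne_top ENat.one_ne_top ?_
      calc Module.length R (Submodule.torsionBy R N r)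
          ≤ Module.length R N := Module.length_le_of_injective _ (Submodule.subtype_injective _)
        _ = Module.length R (R ⧸ P.asIdeal) := e.length_eq
        _ ≤ 1 := (Module.length_eq_one_iff.2 this).le
    · rw [length_torsionBy_of_isSMulRegular
        ((e.isSMulRegular_congr r).2 (isSMulRegular_quotient_of_notMem hrP))]
      exact ENat.zero_ne_top
  | exact A B C f g hf _ hfg hA hC =>
    exact ne_top_of_le_ne_top (WithTop.add_ne_top.2 ⟨hA, hC⟩)
      (length_torsionBy_le_of_exact r hf hfg)

theorem herbrand_quotient_general (hr : ∀ P ∈ minimalPrimes R, r ∉ P)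
    (M : Type*) [AddCommGroup M] [Module R M] [hM : Module.Finite R M] :
    Module.length R (QuotSMulTop r M) =
      Module.length R (Submodule.torsionBy R M r) + genericMultiplicity r M := by
  induction hM using IsNoetherianRing.induction_on_isQuotientEquivQuotientPrime R with
  | subsingleton N =>
    have hN : Module.IsTorsionBy R N r := fun _ => Subsingleton.elim _ _
    rw [length_quotSMulTop_of_isTorsionBy hN, length_torsionBy_of_isTorsionBy hN,
      genericMultiplicity_eq_zero_of_isTorsionBy hr hN, add_zero]
  | quotient N P e =>
    by_cases hrP : r ∈ P.asIdeal
    · have hN : Module.IsTorsionBy R N r := fun x => e.injective (by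
        rw [map_smul, map_zero, isTorsionBy_quotient_of_mem hrP])
      rw [length_quotSMulTop_of_isTorsionBy hN, length_torsionBy_of_isTorsionBy hN,
        genericMultiplicity_eq_zero_of_isTorsionBy hr hN, add_zero]
    · rw [length_torsionBy_of_isSMulRegular
          ((e.isSMulRegular_congr r).2 (isSMulRegular_quotient_of_notMem hrP)), zero_add,
        (QuotSMulTop.congr r e).length_eq, genericMultiplicity_congr e,
        length_quotSMulTop_quotient_eq_genericMultiplicity hrP]
  | exact A B C f g hf hg hfg hA hC =>
    -- Cancellation in `ℕ∞` needs the common summand `ℓ(A[r]) + ℓ(C[r])` to be finite.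
    have hfin : Module.length R (Submodule.torsionBy R A r) +
        Module.length R (Submodule.torsionBy R C r) ≠ ⊤ :=
      WithTop.add_ne_top.2 ⟨length_torsionBy_ne_top hr A, length_torsionBy_ne_top hr C⟩
    apply (ENat.addLECancellable_of_ne_top hfin).inj.1
    rw [length_torsionBy_add_length_quotSMulTop_of_exact r hf hg hfg, hA, hC,
      genericMultiplicity_of_exact hf hg hfg]
    ring

end DimensionOne

theorem mlen_eq_length (R M : Type) [Ring R] [AddCommGroup M] [Module R M] :
    mlen R M = (Module.length R M : WithBot ℕ∞) :=
  (Module.coe_length R M).symm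

theorem coe_genericMultiplicity (R : Type) [CommRing R] [IsNoetherianRing R] (r : R)
    (M : Type) [AddCommGroup M] [Module R M] :
    (genericMultiplicity r M : WithBot ℕ∞) =
      ∑ᶠ P ∈ {P : PrimeSpectrum R | P.asIdeal ∈ minimalPrimes R},
        locLen R M P * mlen R (R ⧸ (P.asIdeal ⊔ Ideal.span {r})) := by
  simp only [locLen, mlen_eq_length, ← WithBot.coe_mul]
  exact (WithBot.addHom : ℕ∞ →+ WithBot ℕ∞).map_finsum_mem _
    (finite_setOf_asIdeal_mem_minimalPrimes R)

/-- **Herbrand quotient formula.** For a 1-dimensional Noetherian `S₁` local ring `R`,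
a finite torsion-free module `F` and a non-zerodivisor `r` in the maximal ideal,
`length_R(F/rF) = Σ_P length_{R_P}(F_P) · length_R(R/(P + rR))`, the sum being over the
minimal primes `P` of `R` (note `(R/P)/r(R/P) ≅ R/(P + rR)`). -/
theorem herbrand_quotient (R : Type) [CommRing R] [IsNoetherianRing R] [IsLocalRing R]
    (hdim : ringKrullDim R = 1)
    (hS1 : ∀ P ∈ associatedPrimes R R, P ∈ minimalPrimes R)
    (F : Type) [AddCommGroup F] [Module R F] [Module.Finite R F]
    (hF : ∀ P ∈ associatedPrimes R F, P ∈ minimalPrimes R)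
    (r : R) (hr : r ∈ maximalIdeal R) (hreg : ∀ x : R, r * x = 0 → x = 0) :
    mlen R (F ⧸ ((Ideal.span {r} : Ideal R) • (⊤ : Submodule R F))) =
      ∑ᶠ P ∈ {P : PrimeSpectrum R | P.asIdeal ∈ minimalPrimes R},
        locLen R F P * mlen R (R ⧸ (P.asIdeal ⊔ Ideal.span {r})) := by
  have : Ring.KrullDimLE 1 R := Ring.krullDimLE_iff.2 hdim.le
  have hreg' : r ∈ nonZeroDivisors R :=
    mem_nonZeroDivisors_iff_left.2 hreg
  have hrmin : ∀ P ∈ minimalPrimes R, r ∉ P := fun P hP hrP =>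
    Set.disjoint_left.1 (Ideal.disjoint_nonZeroDivisors_of_mem_minimalPrimes hP) hrP hreg'
  have hrF : IsSMulRegular F r :=
    isSMulRegular_of_forall_notMem_associatedPrimes fun P hP => hrmin P (hF P hP)
  rw [mlen_eq_length, Submodule.ideal_span_singleton_smul, herbrand_quotient_general hrmin F,
    length_torsionBy_of_isSMulRegular hrF, zero_add, coe_genericMultiplicity]
end

section
/- Let (A, m) be an Artinian local ring with residue field k. Then the injective hull E(k) of k satisfies length_A(E(k)) = length_A(A). -/
open CategoryTheory IsLocalRing

/-- `E` is an injective hull of the residue field of `A`: it is injective and an essential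
extension of the residue field. -/
def IsInjHullResidue (A : Type) [CommRing A] [IsLocalRing A]
    (E : Type) [AddCommGroup E] [Module A E] : Prop :=
  Module.Injective A E ∧
    ∃ f : ResidueField A →ₗ[A] E, Function.Injective f ∧
      ∀ N : Submodule A E, N ≠ ⊥ → N ⊓ LinearMap.range f ≠ ⊥

/-!
Let `E` be the injective hull of the residue field `k`. The functor `Hom(-, E)` is exact because `E`
is injective, and it sends `k` to a module of length one: by essentiality every homomorphism
`k → E` lands in the copy of `k` inside `E`, and `Hom(k, k) ≃ k`. By dévissage it preserves length
on modules of finite length. On an arbitrary module it does not decrease length, since `Hom(-, E)`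
separates submodules; so it preserves infinite length too. Evaluating it at `A` gives `E`.
-/

universe u v

section Injective

variable {R : Type u} [CommRing R] [Small.{v} R] {E : Type v} [AddCommGroup E] [Module R E]
  [Module.Injective R E] {L M N : Type*} [AddCommGroup L] [Module R L] [AddCommGroup M] [Module R M]
  [AddCommGroup N] [Module R N]

lemma lcomp_surjective_of_injective {f : L →ₗ[R] M} (hf : Function.Injective f) :
    Function.Surjective (LinearMap.lcomp R E f) :=
  Module.Injective.extension_property R E L M f hf

lemma length_linearMap_eq_add_of_exact {f : L →ₗ[R] M} {g : M →ₗ[R] N}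
    (hf : Function.Injective f) (hg : Function.Surjective g) (hfg : Function.Exact f g) :
    Module.length R (M →ₗ[R] E) = Module.length R (N →ₗ[R] E) + Module.length R (L →ₗ[R] E) :=
  Module.length_eq_add_of_exact _ _ (LinearMap.lcomp_injective_of_surjective g hg)
    (lcomp_surjective_of_injective hf) (LinearMap.exact_lcomp_of_exact_of_surjective E hfg hg)

end Injective

section Essential

variable {R : Type*} [Ring R] {E S T : Type*} [AddCommGroup E] [Module R E]
  [AddCommGroup S] [Module R S] [AddCommGroup T] [Module R T]

/-- `K` is an essential submodule of `E`: it meets every nonzero submodule nontrivially. An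
injection `f` makes `E` an essential extension when `LinearMap.range f` is essential. -/
def IsEssentialSubmodule (K : Submodule R E) : Prop :=
  ∀ N : Submodule R E, N ≠ ⊥ → N ⊓ K ≠ ⊥

lemma IsEssentialSubmodule.range_le_of_isSimpleModule {K : Submodule R E}
    (hK : IsEssentialSubmodule K) [IsSimpleModule R T] (g : T →ₗ[R] E) :
    LinearMap.range g ≤ K := by
  obtain hg | rfl := g.injective_or_eq_zero
  · have : IsSimpleModule R (LinearMap.range g) :=
      .congr (LinearEquiv.ofInjective g hg).symm
    have range_isAtom : IsAtom (LinearMap.range g) := isSimpleModule_iff_isAtom.1 this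
    rw [← range_isAtom.not_disjoint_iff_le, disjoint_iff]
    exact hK _ range_isAtom.ne_bot
  · simp

lemma exists_comp_eq_of_isEssentialSubmodule_range [IsSimpleModule R T] {f : S →ₗ[R] E}
    (hf : Function.Injective f) (hess : IsEssentialSubmodule (LinearMap.range f))
    (g : T →ₗ[R] E) : ∃ h : T →ₗ[R] S, f ∘ₗ h = g := by
  have g_mem_range (t : T) : g t ∈ LinearMap.range f :=
    hess.range_le_of_isSimpleModule g ⟨t, rfl⟩
  refine ⟨(LinearEquiv.ofInjective f hf).symm ∘ₗ g.codRestrict _ g_mem_range, ?_⟩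
  ext t
  exact congrArg Subtype.val
    ((LinearEquiv.ofInjective f hf).apply_symm_apply (g.codRestrict _ g_mem_range t))

end Essential

section ResidueField

variable {A : Type u} [CommRing A] [IsLocalRing A]

instance isSimpleModule_residueField : IsSimpleModule A (ResidueField A) :=
  isSimpleModule_iff_isCoatom.2 (maximalIdeal.isMaximal A).out

lemma nonempty_linearEquiv_residueField (T : Type*) [AddCommGroup T] [Module A T]
    [hT : IsSimpleModule A T] : Nonempty (T ≃ₗ[A] ResidueField A) := by
  obtain ⟨I, hI, ⟨e⟩⟩ := isSimpleModule_iff_quot_maximal.1 hT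
  obtain rfl := eq_maximalIdeal hI
  exact ⟨e⟩

lemma length_linearMap_residueField_self :
    Module.length A (ResidueField A →ₗ[A] ResidueField A) = 1 := by
  let endEquiv : (ResidueField A →ₗ[A] ResidueField A) ≃ₗ[A] ResidueField A :=
    LinearMap.extendScalarsOfSurjectiveEquiv residue_surjective ≪≫ₗ
      LinearMap.ringLmapEquivSelf (ResidueField A) A (ResidueField A)
  rw [endEquiv.length_eq, Module.length_eq_one]

variable {E : Type v} [AddCommGroup E] [Module A E]

lemma length_linearMap_residueField_eq_one {f : ResidueField A →ₗ[A] E}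
    (hf : Function.Injective f) (hess : IsEssentialSubmodule (LinearMap.range f)) :
    Module.length A (ResidueField A →ₗ[A] E) = 1 := by
  have compRight_bijective :
      Function.Bijective (LinearMap.compRight A f (M := ResidueField A)) :=
    ⟨fun _ _ ↦ (LinearMap.cancel_left hf).1, exists_comp_eq_of_isEssentialSubmodule_range hf hess⟩
  rw [← (LinearEquiv.ofBijective _ compRight_bijective).length_eq,
    length_linearMap_residueField_self]

lemma nontrivial_linearMap_of_finite [Nontrivial (ResidueField A →ₗ[A] E)] (M : Type*)
    [AddCommGroup M] [Module A M] [Module.Finite A M] [Nontrivial M] :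
    Nontrivial (M →ₗ[A] E) := by
  obtain ⟨N, hN⟩ := IsCoatomic.exists_coatom (Submodule A M)
  have : IsSimpleModule A (M ⧸ N) := isSimpleModule_iff_isCoatom.2 hN
  obtain ⟨e⟩ := nonempty_linearEquiv_residueField (A := A) (M ⧸ N)
  have toResidueField_surjective : Function.Surjective (e.toLinearMap ∘ₗ N.mkQ) :=
    e.surjective.comp N.mkQ_surjective
  exact (LinearMap.lcomp_injective_of_surjective (S := A) _ toResidueField_surjective).nontrivial

variable [Small.{v} A] [Module.Injective A E]

lemma exists_linearMap_apply_ne_zero [Nontrivial (ResidueField A →ₗ[A] E)] {M : Type*}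
    [AddCommGroup M] [Module A M] {x : M} (hx : x ≠ 0) : ∃ g : M →ₗ[A] E, g x ≠ 0 := by
  have : Nontrivial (A ∙ x) := by simpa [Submodule.nontrivial_iff_ne_bot] using hx
  have := nontrivial_linearMap_of_finite (A := A) (E := E) (A ∙ x)
  obtain ⟨ψ, hψ⟩ := exists_ne (0 : A ∙ x →ₗ[A] E)
  obtain ⟨g, rfl⟩ := lcomp_surjective_of_injective (A ∙ x).subtype_injective ψ
  refine ⟨g, fun hgx ↦ hψ ?_⟩
  exact LinearMap.le_ker_iff_comp_subtype_eq_zero.1 <|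
    (Submodule.span_singleton_le_iff_mem x (LinearMap.ker g)).2 hgx

lemma strictAnti_ker_lcomp_subtype [Nontrivial (ResidueField A →ₗ[A] E)] {M : Type*}
    [AddCommGroup M] [Module A M] :
    StrictAnti fun N : Submodule A M ↦ LinearMap.ker (LinearMap.lcomp A E N.subtype) := by
  have mem_ker_lcomp (N : Submodule A M) (g : M →ₗ[A] E) :
      g ∈ LinearMap.ker (LinearMap.lcomp A E N.subtype) ↔ N ≤ LinearMap.ker g :=
    LinearMap.le_ker_iff_comp_subtype_eq_zero.symm
  intro N N' hlt
  simp only [SetLike.lt_iff_le_and_exists, SetLike.le_def, mem_ker_lcomp]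
  obtain ⟨x, hxN', hxN⟩ := SetLike.exists_of_lt hlt
  have mkQ_ne_zero : N.mkQ x ≠ 0 := by simpa using hxN
  obtain ⟨g, hg⟩ := exists_linearMap_apply_ne_zero (A := A) (E := E) mkQ_ne_zero
  refine ⟨fun h hh ↦ hlt.le.trans hh, g ∘ₗ N.mkQ, ?_, fun hN' ↦ hg (hN' hxN')⟩
  exact N.ker_mkQ.ge.trans (LinearMap.ker_le_ker_comp N.mkQ g)

lemma length_le_length_linearMap [Nontrivial (ResidueField A →ₗ[A] E)] (M : Type*)
    [AddCommGroup M] [Module A M] : Module.length A M ≤ Module.length A (M →ₗ[A] E) := by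
  rw [← WithBot.coe_le_coe, Module.coe_length, Module.coe_length,
    ← Order.krullDim_orderDual (α := Submodule A (M →ₗ[A] E))]
  exact Order.krullDim_le_of_strictMono _ strictAnti_ker_lcomp_subtype.dual_right

lemma length_linearMap_eq_of_isFiniteLength
    (hE : Module.length A (ResidueField A →ₗ[A] E) = 1) {M : Type*} [AddCommGroup M] [Module A M]
    (hM : IsFiniteLength A M) : Module.length A (M →ₗ[A] E) = Module.length A M := by
  induction hM with
  | of_subsingleton => rw [Module.length_eq_zero, Module.length_eq_zero]
  | @of_simple_quotient M _ _ N _ _ ih =>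
    obtain ⟨e⟩ := nonempty_linearEquiv_residueField (A := A) (M ⧸ N)
    have exact_mkQ := LinearMap.exact_subtype_mkQ N
    calc Module.length A (M →ₗ[A] E)
      _ = Module.length A (M ⧸ N →ₗ[A] E) + Module.length A (N →ₗ[A] E) :=
        length_linearMap_eq_add_of_exact N.subtype_injective N.mkQ_surjective exact_mkQ
      _ = 1 + Module.length A N := by rw [(e.congrLeft E A).length_eq, hE, ih]
      _ = Module.length A N + Module.length A (M ⧸ N) := by
        rw [Module.length_eq_one A (M ⧸ N), add_comm]
      _ = Module.length A M :=
        (Module.length_eq_add_of_exact _ _ N.subtype_injective N.mkQ_surjective exact_mkQ).symm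

theorem length_linearMap_eq (hE : Module.length A (ResidueField A →ₗ[A] E) = 1) (M : Type*)
    [AddCommGroup M] [Module A M] : Module.length A (M →ₗ[A] E) = Module.length A M := by
  by_cases hM : IsFiniteLength A M
  · exact length_linearMap_eq_of_isFiniteLength hE hM
  · have : Nontrivial (ResidueField A →ₗ[A] E) :=
      Module.length_pos_iff (R := A).1 (hE ▸ zero_lt_one)
    have length_eq_top : Module.length A M = ⊤ := not_imp_comm.1 Module.length_ne_top_iff.1 hM
    rw [length_eq_top, ← top_le_iff, ← length_eq_top]
    exact length_le_length_linearMap M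

end ResidueField

theorem length_injective_hull_general (A : Type u) [CommRing A] [IsLocalRing A] [Small.{v} A]
    (E : Type v) [AddCommGroup E] [Module A E] [Module.Injective A E]
    (f : ResidueField A →ₗ[A] E) (hf : Function.Injective f)
    (hess : IsEssentialSubmodule (LinearMap.range f)) :
    Module.length A E = Module.length A A := by
  rw [← (LinearMap.ringLmapEquivSelf A A E).length_eq]
  exact length_linearMap_eq (length_linearMap_residueField_eq_one hf hess) A

/-- For an Artinian local ring `A` with residue field `k`, the injective hull `E(k)`
satisfies `length_A(E(k)) = length_A(A)`. -/
theorem length_injective_hull (A : Type) [CommRing A] [IsArtinianRing A] [IsLocalRing A]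
    (E : Type) [AddCommGroup E] [Module A E] (hE : IsInjHullResidue A E) :
    mlen A E = mlen A A := by
  obtain ⟨_, f, hf, hess⟩ := hE
  rw [mlen, mlen, ← Module.coe_length, ← Module.coe_length,
    length_injective_hull_general A E f hf hess]
end

section
/- Let R be a Noetherian ring and F a finite R-module satisfying S₂. Any short exact sequence 0 → F → F′ → Q → 0 of finite R-modules with Supp(Q) ⊆ Supp(F) of codimension ≥ 2 in Supp(F) splits. -/
open CategoryTheory IsLocalRing

/-- The depth of a module over a local ring, as the least `i` with `Ext^i(k, M) ≠ 0`. -/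
noncomputable def edepth (R : Type) [CommRing R] [IsLocalRing R]
    (M : Type) [AddCommGroup M] [Module R M] : ℕ∞ :=
  sInf {n : ℕ∞ | ∃ i : ℕ, (i : ℕ∞) = n ∧ Nontrivial (extM R (ResidueField R) M i)}

/-- Serre's condition `S₂` for a module: for every prime `P`,
`depth_{R_P}(M_P) ≥ min(2, dim Supp(M_P))`. -/
def IsS2 (R : Type) [CommRing R] (M : Type) [AddCommGroup M] [Module R M] : Prop :=
  ∀ P : PrimeSpectrum R,
    min 2 (ringKrullDim ((Localization.AtPrime P.asIdeal) ⧸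
        Module.annihilator (Localization.AtPrime P.asIdeal)
          (LocalizedModule P.asIdeal.primeCompl M))) ≤
      ((edepth (Localization.AtPrime P.asIdeal)
        (LocalizedModule P.asIdeal.primeCompl M) : ℕ∞) : WithBot ℕ∞)

/-!
A map into `F` defined on a submodule `D` of `F'` is extended one element at a time. If `D ≠ F'`,
then `F' / D` has an associated prime `P = (D : x)`, and the map restricted to `P x` gives a linear
map `P → F`. If `Ext¹(κ(P), F_P) = 0`, a multiple of this map by some `s ∉ P` is multiplication by
an element of `F`, which provides a value at `s x ∉ D`. Hence a maximal extension of
`id : F → F` is a retraction of `F'` onto `F`. Only primes in the support of `F' / F` occur, and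
there `S₂` and codimension at least two force depth at least two.
-/

universe u v w

theorem subsingleton_abelianExt_of_isZero_ext {R : Type*} [Ring R] {C : Type u} [Category.{v} C]
    [Abelian C] [Linear R C] [EnoughProjectives C] [HasExt.{w} C] {X Y : C} {n : ℕ}
    (h : Limits.IsZero (((Ext R C (n + 1)).obj (Opposite.op X)).obj Y)) :
    Subsingleton (Abelian.Ext X Y (n + 1)) := by
  let P := projectiveResolution X
  have hexact := h.of_iso (P.isoExt (R := R) (n + 1) Y).symm
  rw [← HomologicalComplex.exactAt_iff_isZero_homology,
    HomologicalComplex.exactAt_iff' _ n (n + 1) (n + 2) (by simp) (by simp),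
    ShortComplex.moduleCat_exact_iff] at hexact
  refine subsingleton_of_forall_eq 0 fun α ↦ ?_
  obtain ⟨c, hc, rfl⟩ := P.extMk_surjective α (n + 2) rfl
  exact (P.extMk_eq_zero_iff c (n + 2) rfl hc n rfl).2 (hexact c hc)

theorem exists_comp_eq_of_subsingleton_ext_one {C : Type u} [Category.{v} C] [Abelian C]
    [HasExt.{w} C] {S : ShortComplex C} (hS : S.ShortExact) {Y : C}
    [Subsingleton (Abelian.Ext S.X₃ Y 1)] (φ : S.X₁ ⟶ Y) : ∃ ψ : S.X₂ ⟶ Y, S.f ≫ ψ = φ := by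
  obtain ⟨β, hβ⟩ := Abelian.Ext.contravariant_sequence_exact₁ hS Y (Abelian.Ext.mk₀ φ) (add_zero 1)
    (Subsingleton.elim _ _)
  obtain ⟨ψ, rfl⟩ := (Abelian.Ext.mk₀_bijective _ _).2 β
  rw [Abelian.Ext.mk₀_comp_mk₀] at hβ
  exact ⟨ψ, (Abelian.Ext.mk₀_bijective _ _).1 hβ⟩

theorem exists_eq_smul_of_subsingleton_ext_one {A : Type u} [CommRing A] {I : Ideal A}
    {M : Type u} [AddCommGroup M] [Module A M]
    (h : Subsingleton (((Ext A (ModuleCat.{u} A) 1).obj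
      (Opposite.op (ModuleCat.of A (A ⧸ I)))).obj (ModuleCat.of A M)))
    (φ : I →ₗ[A] M) : ∃ m : M, ∀ a : I, φ a = (a : A) • m := by
  have : HasExt.{u} (ModuleCat.{u} A) := hasExt_of_enoughProjectives _
  let S : ShortComplex (ModuleCat.{u} A) :=
    .mk (ModuleCat.ofHom I.subtype) (ModuleCat.ofHom I.mkQ) <| by
      ext a
      simpa using Ideal.Quotient.eq_zero_iff_mem.2 a.2
  have hS : S.ShortExact := ModuleCat.shortComplex_shortExact S
    (LinearMap.exact_subtype_mkQ I) I.subtype_injective I.mkQ_surjective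
  have : Subsingleton (Abelian.Ext S.X₃ (ModuleCat.of A M) 1) :=
    subsingleton_abelianExt_of_isZero_ext (R := A) (ModuleCat.isZero_of_subsingleton _)
  obtain ⟨ψ, hψ⟩ := exists_comp_eq_of_subsingleton_ext_one hS (ModuleCat.ofHom φ)
  refine ⟨ψ.hom 1, fun a ↦ ?_⟩
  calc φ a = ψ.hom (a : A) := (LinearMap.congr_fun (congrArg ModuleCat.Hom.hom hψ) a).symm
    _ = (a : A) • ψ.hom 1 := by rw [← map_smul, smul_eq_mul, mul_one]

/-- The local form of Baer's criterion at an ideal `P`: up to a multiplier outside `P`, every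
linear map `P → M` extends to `R`. When `P` is prime and finitely presented, this says that
`Ext¹(κ(P), M_P) = 0`. -/
def BaerAt {R : Type*} [CommRing R] (P : Ideal R) (M : Type*) [AddCommGroup M] [Module R M] :
    Prop :=
  ∀ φ : P →ₗ[R] M, ∃ s ∉ P, ∃ m : M, ∀ p : P, s • φ p = (p : R) • m

theorem exists_smul_eq_smul_of_isLocalizedModule {R M M' : Type*} [CommRing R] (S : Submonoid R)
    [AddCommGroup M] [Module R M] [AddCommGroup M'] [Module R M']
    (f : M →ₗ[R] M') [IsLocalizedModule S f] {I : Ideal R} [Module.Finite R I] (φ : I →ₗ[R] M)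
    {u : M'} (hu : ∀ p : I, f (φ p) = (p : R) • u) :
    ∃ s ∈ S, ∃ m : M, ∀ p : I, s • φ p = (p : R) • m := by
  obtain ⟨⟨m, s⟩, hs⟩ := IsLocalizedModule.surj S f u
  obtain ⟨t, ht⟩ := Module.Finite.exists_smul_of_comp_eq_of_isLocalizedModule S f
    (s • φ) (LinearMap.toSpanSingleton R M m ∘ₗ I.subtype) <| by
      ext p
      simp [Submonoid.smul_def, hu, ← hs, smul_comm (s : R)]
  refine ⟨t * s, (t * s).2, t • m, fun p ↦ ?_⟩
  simpa [mul_smul, Submonoid.smul_def, smul_comm (t : R)] using LinearMap.congr_fun ht p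

theorem baerAt_of_subsingleton_ext_one {R : Type u} [CommRing R] (P : Ideal R) [P.IsPrime]
    [Module.Finite R P] {M : Type u} [AddCommGroup M] [Module R M]
    (h : Subsingleton (((Ext (Localization.AtPrime P)
      (ModuleCat.{u} (Localization.AtPrime P)) 1).obj
        (Opposite.op (ModuleCat.of _ (ResidueField (Localization.AtPrime P))))).obj
          (ModuleCat.of _ (LocalizedModule P.primeCompl M)))) :
    BaerAt P M := by
  intro φ
  let A := Localization.AtPrime P
  have hmax : P.map (algebraMap R A) = maximalIdeal A := Localization.AtPrime.map_eq_maximalIdeal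
  change Subsingleton (((Ext A (ModuleCat.{u} A) 1).obj (Opposite.op
    (ModuleCat.of A (A ⧸ maximalIdeal A)))).obj (ModuleCat.of A _)) at h
  rw [← hmax] at h
  obtain ⟨u, hu⟩ := exists_eq_smul_of_subsingleton_ext_one h <|
    IsLocalizedModule.mapExtendScalars P.primeCompl (Algebra.idealMap A P)
      (LocalizedModule.mkLinearMap P.primeCompl M) A φ
  refine exists_smul_eq_smul_of_isLocalizedModule P.primeCompl
    (LocalizedModule.mkLinearMap P.primeCompl M) φ (u := u) fun p ↦ ?_
  calc LocalizedModule.mkLinearMap P.primeCompl M (φ p)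
    _ = IsLocalizedModule.mapExtendScalars P.primeCompl (Algebra.idealMap A P)
          (LocalizedModule.mkLinearMap P.primeCompl M) A φ (Algebra.idealMap A P p) :=
        (IsLocalizedModule.map_apply _ _ _ _ _).symm
    _ = algebraMap R A p • u := hu _
    _ = (p : R) • u := algebraMap_smul A (p : R) u

section Extension

variable {R M N Q : Type*} [CommRing R] [AddCommGroup M] [Module R M] [AddCommGroup N] [Module R N]
  [AddCommGroup Q] [Module R Q]

theorem exists_le_linearPMap_mem_domain (ρ : N →ₗ.[R] Q) {y : N} {q : Q}
    (h : ∀ (r : R) (hr : r • y ∈ ρ.domain), ρ ⟨r • y, hr⟩ = r • q) :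
    ∃ σ : N →ₗ.[R] Q, ρ ≤ σ ∧ y ∈ σ.domain := by
  let τ : N →ₗ.[R] Q := LinearPMap.mkSpanSingleton' y q fun r hr ↦ by
    rw [RingHom.id_apply, ← h r (hr ▸ ρ.domain.zero_mem)]
    exact (congrArg ρ (Subtype.ext hr)).trans ρ.map_zero
  have hτ : ∀ (a : ρ.domain) (b : τ.domain), (a : N) = b → ρ a = τ b := by
    rintro ⟨_, ha⟩ ⟨b, hb⟩ rfl
    obtain ⟨r, rfl⟩ := Submodule.mem_span_singleton.1 hb
    exact (h r ha).trans (LinearPMap.mkSpanSingleton'_apply y q _ r hb).symm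
  exact ⟨ρ.sup τ hτ, ρ.left_le_sup τ hτ,
    Submodule.mem_sup_right (Submodule.mem_span_singleton_self y)⟩

theorem mem_domain_extensionOfMax (i : M →ₗ[R] N) (f : M →ₗ[R] Q)
    [Fact (Function.Injective i)] {y : N} {q : Q}
    (h : ∀ (r : R) (hr : r • y ∈ (Module.Baer.extensionOfMax i f).domain),
      (Module.Baer.extensionOfMax i f).toLinearPMap ⟨r • y, hr⟩ = r • q) :
    y ∈ (Module.Baer.extensionOfMax i f).domain := by
  let ρ := Module.Baer.extensionOfMax i f
  obtain ⟨σ, hρσ, hy⟩ := exists_le_linearPMap_mem_domain ρ.toLinearPMap h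
  let σ' : Module.Baer.ExtensionOf i f :=
    { σ with
      le := ρ.le.trans hρσ.1
      is_extension := fun m ↦ (ρ.is_extension m).trans (hρσ.2 rfl) }
  have hσ : σ' = ρ := Module.Baer.extensionOfMax_is_max i f σ' hρσ
  exact congrArg (·.domain) hσ ▸ hy

theorem exists_isPrime_forall_mem_iff_smul_mem [IsNoetherianRing R] {D : Submodule R N}
    (hD : D ≠ ⊤) : ∃ P : Ideal R, P.IsPrime ∧ ∃ x : N, ∀ r, r ∈ P ↔ r • x ∈ D := by
  have : Nontrivial (N ⧸ D) := Submodule.Quotient.nontrivial_iff.2 hD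
  obtain ⟨P, hP⟩ := associatedPrimes.nonempty R (N ⧸ D)
  obtain ⟨hprime, x', rfl⟩ := isAssociatedPrime_iff.1 hP
  obtain ⟨x, rfl⟩ := D.mkQ_surjective x'
  refine ⟨_, hprime, x, fun r ↦ ?_⟩
  rw [Submodule.mem_colon_singleton, ← map_smul, Submodule.mem_bot, Submodule.mkQ_apply,
    Submodule.Quotient.mk_eq_zero]

theorem exists_extension_of_baerAt [IsNoetherianRing R] {C : Type*} [AddCommGroup C] [Module R C]
    {i : M →ₗ[R] N} {g : N →ₗ[R] C} (hi : Function.Injective i) (hig : Function.Exact i g)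
    (hQ : ∀ P ∈ Module.support R C, BaerAt P.asIdeal Q) (f : M →ₗ[R] Q) :
    ∃ f' : N →ₗ[R] Q, f' ∘ₗ i = f := by
  have : Fact (Function.Injective i) := ⟨hi⟩
  let ρ := Module.Baer.extensionOfMax i f
  suffices htop : ρ.domain = ⊤ from
    ⟨ρ.toFun ∘ₗ LinearMap.codRestrict ρ.domain LinearMap.id fun n ↦ htop ▸ Submodule.mem_top,
      LinearMap.ext fun m ↦ (ρ.is_extension m).symm⟩
  by_contra hne
  obtain ⟨P, hprime, x, mem_P⟩ := exists_isPrime_forall_mem_iff_smul_mem hne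
  have hsupp : ⟨P, hprime⟩ ∈ Module.support R C := by
    refine Module.mem_support_iff'.2 ⟨g x, fun r hr hrx ↦ hr ((mem_P r).2 ?_)⟩
    exact ρ.le ((hig (r • x)).1 ((map_smul g r x).trans hrx))
  let φ : P →ₗ[R] Q := ρ.toFun ∘ₗ
    (LinearMap.toSpanSingleton R N x ∘ₗ P.subtype).codRestrict ρ.domain fun p ↦ (mem_P p).1 p.2
  obtain ⟨s, hs, q, hq⟩ := hQ _ hsupp φ
  have hsx : s • x ∈ ρ.domain := mem_domain_extensionOfMax i f fun r hr ↦ by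
    have hr' : r ∈ P :=
      (hprime.mem_or_mem ((mem_P (r * s)).2 (by rwa [mul_smul]))).resolve_right hs
    rw [← hq ⟨r, hr'⟩, ← map_smul]
    exact congrArg ρ.toFun (Subtype.ext (show r • s • x = (s * r) • x by rw [mul_comm, mul_smul]))
  exact hs ((mem_P s).2 hsx)

end Extension

theorem subsingleton_extM_of_lt_edepth {R : Type} [CommRing R] [IsLocalRing R] {M : Type}
    [AddCommGroup M] [Module R M] {n : ℕ} (h : n < edepth R M) :
    Subsingleton (extM R (ResidueField R) M n) :=
  not_nontrivial_iff_subsingleton.1 fun hn ↦ notMem_of_lt_csInf' h ⟨n, rfl, hn⟩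

theorem IsS2.subsingleton_extM_one {R : Type} [CommRing R] {M : Type} [AddCommGroup M] [Module R M]
    (hM : IsS2 R M) {P : PrimeSpectrum R}
    (hP : 2 ≤ ringKrullDim ((Localization.AtPrime P.asIdeal) ⧸
      Module.annihilator (Localization.AtPrime P.asIdeal)
        (LocalizedModule P.asIdeal.primeCompl M))) :
    Subsingleton (extM (Localization.AtPrime P.asIdeal)
      (ResidueField (Localization.AtPrime P.asIdeal))
      (LocalizedModule P.asIdeal.primeCompl M) 1) := by
  have hdepth : (2 : ℕ∞) ≤ edepth (Localization.AtPrime P.asIdeal)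
      (LocalizedModule P.asIdeal.primeCompl M) :=
    WithBot.coe_le_coe.1 ((le_min le_rfl hP).trans (hM P))
  exact subsingleton_extM_of_lt_edepth (lt_of_lt_of_le (by norm_num) hdepth)

theorem s2_splitting_general {R : Type u} [CommRing R] [IsNoetherianRing R]
    {F : Type u} {F' : Type v} {Q : Type w} [AddCommGroup F] [Module R F]
    [AddCommGroup F'] [Module R F'] [AddCommGroup Q] [Module R Q]
    {f : F →ₗ[R] F'} {g : F' →ₗ[R] Q} (hf : Function.Injective f) (hfg : Function.Exact f g)
    (hExt : ∀ P ∈ Module.support R Q, Subsingleton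
      (((Ext (Localization.AtPrime P.asIdeal)
        (ModuleCat.{u} (Localization.AtPrime P.asIdeal)) 1).obj
          (Opposite.op (ModuleCat.of _ (ResidueField (Localization.AtPrime P.asIdeal))))).obj
            (ModuleCat.of _ (LocalizedModule P.asIdeal.primeCompl F)))) :
    ∃ s : F' →ₗ[R] F, s ∘ₗ f = LinearMap.id :=
  exists_extension_of_baerAt hf hfg
    (fun P hP ↦ baerAt_of_subsingleton_ext_one P.asIdeal (hExt P hP)) LinearMap.id

/-- If `F` is a finite `S₂` module, then any short exact sequence `0 → F → F′ → Q → 0`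
with `Supp Q ⊆ Supp F` of codimension `≥ 2` in `Supp F` splits. -/
theorem s2_splitting (R : Type) [CommRing R] [IsNoetherianRing R]
    (F F' Q : Type) [AddCommGroup F] [Module R F] [AddCommGroup F'] [Module R F']
    [AddCommGroup Q] [Module R Q]
    [Module.Finite R F] [Module.Finite R F'] [Module.Finite R Q]
    (hF : IsS2 R F)
    (f : F →ₗ[R] F') (g : F' →ₗ[R] Q)
    (hf : Function.Injective f) (hg : Function.Surjective g)
    (hfg : LinearMap.range f = LinearMap.ker g)
    (hsupp : ∀ P : PrimeSpectrum R, Nontrivial (LocalizedModule P.asIdeal.primeCompl Q) →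
      Nontrivial (LocalizedModule P.asIdeal.primeCompl F))
    (hcodim : ∀ P : PrimeSpectrum R, Nontrivial (LocalizedModule P.asIdeal.primeCompl Q) →
      2 ≤ ringKrullDim ((Localization.AtPrime P.asIdeal) ⧸
        Module.annihilator (Localization.AtPrime P.asIdeal)
          (LocalizedModule P.asIdeal.primeCompl F))) :
    ∃ s : F' →ₗ[R] F, s.comp f = LinearMap.id :=
  s2_splitting_general hf (LinearMap.exact_iff.2 hfg.symm)
    fun P hP ↦ hF.subsingleton_extM_one (hcodim P hP)
end

section
/- Let (R, m) be a 1-dimensional Noetherian S₁ local ring with dualizing module Ω. Then for every finite R-module M, Ext^i_R(M, Ω) = 0 for all i ≥ 2, and if M is torsion free then Ext^1_R(M, Ω) = 0 as well. -/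
open CategoryTheory IsLocalRing

/-- `Ω` is a dualizing module over the 1-dimensional local ring `R`:
`Ext^i_R(k, Ω) = δ_{i,1} · k`. -/
def IsDualizing1 (R : Type) [CommRing R] [IsLocalRing R]
    (Ω : Type) [AddCommGroup Ω] [Module R Ω] : Prop :=
  (∀ i : ℕ, i ≠ 1 → Subsingleton (extM R (ResidueField R) Ω i)) ∧
    Nonempty ((extM R (ResidueField R) Ω 1) ≃ₗ[R] ResidueField R)

/-!
Bass's argument: if `p` is a prime and `x ∈ m ∖ p`, then `(R ⧸ p) / x (R ⧸ p)` is supported on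
primes strictly larger than `p`. When `Ext^(i+1)` into `Ω` vanishes on `R ⧸ q` for these `q`, it
vanishes on that module by a prime filtration, so `x` acts surjectively on `Ext^i(R ⧸ p, Ω)`, which
is then zero by Nakayama. Descending from the residue field, vanishing in all degrees `> d` spreads
to every `R ⧸ p`, hence to every finite module. If moreover `m` contains an `M`-regular element `x`,
the same Nakayama step applied to `M / x M` gives vanishing for `M` in degree `d`.
-/

universe w v u

section DerivedFunctorComparison

variable {R : Type*} [CommRing R] {C : Type u} [Category.{v} C] [Abelian C] [Linear R C]
  [EnoughProjectives C]

theorem subsingleton_derivedExt_zero_iff {X : C} (P : ProjectiveResolution X) (Y : C) :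
    Subsingleton (((Ext R C 0).obj (.op X)).obj Y) ↔
      ∀ f : P.complex.X 0 ⟶ Y, P.complex.d 1 0 ≫ f = 0 → f = 0 := by
  have d_zero_zero : (P.complex.linearYonedaObj R Y).d 0 0 = 0 :=
    HomologicalComplex.shape _ _ _ (by simp)
  rw [← ModuleCat.isZero_iff_subsingleton, (P.isoExt 0 Y).isZero_iff,
    ← HomologicalComplex.exactAt_iff_isZero_homology,
    HomologicalComplex.exactAt_iff' _ 0 0 1 (by simp) (by simp),
    ShortComplex.exact_iff_mono _ d_zero_zero,
    ModuleCat.mono_iff_injective, injective_iff_map_eq_zero]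
  rfl

theorem subsingleton_derivedExt_zero_iff_subsingleton_hom (X Y : C) :
    Subsingleton (((Ext R C 0).obj (.op X)).obj Y) ↔ Subsingleton (X ⟶ Y) := by
  let P := projectiveResolution X
  rw [subsingleton_derivedExt_zero_iff P]
  constructor
  · refine fun h => subsingleton_of_forall_eq 0
      fun (f : ((ChainComplex.single₀ C).obj X).X 0 ⟶ Y) => ?_
    exact Limits.zero_of_epi_comp (P.π.f 0)
      (h (P.π.f 0 ≫ f) (by rw [← Category.assoc, P.complex_d_comp_π_f_zero, Limits.zero_comp]))
  · intro h f hf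
    have desc_eq_zero : P.exact₀.desc f hf = 0 := h.elim _ _
    rw [← P.exact₀.g_desc f hf, desc_eq_zero, Limits.comp_zero]

theorem subsingleton_derivedExt_succ_iff {X : C} (P : ProjectiveResolution X) (Y : C) (n : ℕ) :
    Subsingleton (((Ext R C (n + 1)).obj (.op X)).obj Y) ↔
      ∀ f : P.complex.X (n + 1) ⟶ Y, P.complex.d (n + 2) (n + 1) ≫ f = 0 →
        ∃ g : P.complex.X n ⟶ Y, P.complex.d (n + 1) n ≫ g = f := by
  rw [← ModuleCat.isZero_iff_subsingleton, (P.isoExt (n + 1) Y).isZero_iff,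
    ← HomologicalComplex.exactAt_iff_isZero_homology,
    HomologicalComplex.exactAt_iff' _ n (n + 1) (n + 2) (by simp) (by simp),
    ShortComplex.moduleCat_exact_iff]
  rfl

theorem subsingleton_derivedExt_iff [HasExt.{w} C] (X Y : C) (n : ℕ) :
    Subsingleton (((Ext R C n).obj (.op X)).obj Y) ↔ Subsingleton (Abelian.Ext X Y n) := by
  cases n with
  | zero =>
    rw [subsingleton_derivedExt_zero_iff_subsingleton_hom, Abelian.Ext.homEquiv₀.subsingleton_congr]
  | succ n =>
    let P := projectiveResolution X
    rw [subsingleton_derivedExt_succ_iff P]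
    constructor
    · intro h
      refine subsingleton_of_forall_eq 0 fun x => ?_
      obtain ⟨f, hf, rfl⟩ := P.extMk_surjective x (n + 2) rfl
      exact (P.extMk_eq_zero_iff f (n + 2) rfl hf n rfl).2 (h f hf)
    · intro h f hf
      exact (P.extMk_eq_zero_iff f (n + 2) rfl hf n rfl).1 (Subsingleton.elim _ _)

end DerivedFunctorComparison

section ExtVanishing

variable {C : Type u} [Category.{v} C] [Abelian C] [HasExt.{w} C]

theorem subsingleton_ext_congr_left {X Y : C} (e : X ≅ Y) (L : C) (n : ℕ) :
    Subsingleton (Abelian.Ext X L n) ↔ Subsingleton (Abelian.Ext Y L n) :=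
  (((Abelian.extFunctor n).flip.obj L).mapIso e.op).addCommGroupIsoToAddEquiv
    |>.subsingleton_congr.symm

theorem subsingleton_ext_of_isZero_left {X : C} (hX : Limits.IsZero X) (L : C) (n : ℕ) :
    Subsingleton (Abelian.Ext X L n) := by
  refine subsingleton_of_forall_eq 0 fun x => ?_
  rw [← Abelian.Ext.mk₀_id_comp x, hX.eq_of_src (𝟙 X) 0, Abelian.Ext.mk₀_zero,
    Abelian.Ext.zero_comp]

theorem subsingleton_ext_of_shortExact {S : ShortComplex C} (hS : S.ShortExact) (L : C) (n : ℕ)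
    (h₁ : Subsingleton (Abelian.Ext S.X₁ L n)) (h₃ : Subsingleton (Abelian.Ext S.X₃ L n)) :
    Subsingleton (Abelian.Ext S.X₂ L n) := by
  refine subsingleton_of_forall_eq 0 fun x => ?_
  obtain ⟨y, rfl⟩ := Abelian.Ext.contravariant_sequence_exact₂ hS L x (Subsingleton.elim _ _)
  rw [Subsingleton.elim y 0, Abelian.Ext.comp_zero]

end ExtVanishing

section NoetherianRing

variable {R : Type u} [CommRing R]

theorem isSMulRegular_quotient_of_notMem_s10 {p : Ideal R} [p.IsPrime] {x : R} (hx : x ∉ p) :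
    IsSMulRegular (R ⧸ p) x :=
  (isSMulRegular_quotient_iff_mem_of_smul_mem p x).2 fun _ hy =>
    (Ideal.IsPrime.mem_or_mem ‹_› hy).resolve_left hx

theorem lt_of_mem_support_quotSMulTop {p q : PrimeSpectrum R} {x : R} (hx : x ∉ p.asIdeal)
    (hq : q ∈ Module.support R (QuotSMulTop x (R ⧸ p.asIdeal))) : p < q := by
  rw [Module.support_quotSMulTop, Module.support_eq_zeroLocus, Ideal.annihilator_quotient] at hq
  refine lt_of_le_of_ne hq.1 ?_
  rintro rfl
  exact hx (hq.2 rfl)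

theorem exists_mem_isSMulRegular_of_not_le [IsNoetherianRing R] {M : Type v} [AddCommGroup M]
    [Module R M] [Module.Finite R M] {I : Ideal R} (hI : ∀ p ∈ associatedPrimes R M, ¬I ≤ p) :
    ∃ x ∈ I, IsSMulRegular M x := by
  by_contra! no_regular
  have subset_union : (I : Set R) ⊆ ⋃ p ∈ associatedPrimes R M, p := by
    rw [biUnion_associatedPrimes_eq_compl_regular]
    exact no_regular
  obtain ⟨p, hp, hIp⟩ := (Ideal.subset_union_prime_finite (associatedPrimes.finite R M) (f := id)
    0 0 fun p hp _ _ => hp.isPrime).1 subset_union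
  exact hI p hp hIp

variable [IsNoetherianRing R] [Small.{v} R]

open Pointwise in
theorem subsingleton_ext_of_quotSMulTop {M L : ModuleCat.{v} R} [Module.Finite R M]
    [Module.Finite R L] {x : R} (hx : x ∈ Ring.jacobson R) (hreg : IsSMulRegular M x) {n : ℕ}
    (h : Subsingleton (Abelian.Ext (ModuleCat.of R (QuotSMulTop x M)) L (n + 1))) :
    Subsingleton (Abelian.Ext M L n) := by
  have smul_surjective (y : Abelian.Ext M L n) : ∃ z : Abelian.Ext M L n, x • z = y := by
    obtain ⟨z, hz⟩ := Abelian.Ext.contravariant_sequence_exact₁ hreg.smulShortComplex_shortExact L y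
      (add_comm 1 n) (@Subsingleton.elim _ h _ _)
    change Abelian.Ext M L n at z
    change (Abelian.Ext.mk₀ (x • 𝟙 M)).comp z (zero_add n) = y at hz
    rw [Abelian.Ext.mk₀_smul, Abelian.Ext.smul_comp, Abelian.Ext.mk₀_id_comp] at hz
    exact ⟨z, hz⟩
  by_contra! nontrivial_ext
  refine Submodule.top_ne_pointwise_smul_of_mem_jacobson_annihilator
    (R := R) (M := Abelian.Ext M L n) (r := x) ?_ ?_
  · exact Ideal.jacobson_mono bot_le (Ideal.jacobson_bot (R := R) ▸ hx)
  · refine (eq_top_iff.2 fun y _ => ?_).symm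
    obtain ⟨z, rfl⟩ := smul_surjective y
    exact Submodule.smul_mem_pointwise_smul z x ⊤ trivial

theorem subsingleton_ext_of_support {M : Type v} [AddCommGroup M] [Module R M]
    [hM : Module.Finite R M] {L : ModuleCat.{v} R} {n : ℕ}
    (h : ∀ p ∈ Module.support R M,
      Subsingleton (Abelian.Ext (ModuleCat.of R (Shrink.{v} (R ⧸ p.asIdeal))) L n)) :
    Subsingleton (Abelian.Ext (ModuleCat.of R M) L n) := by
  induction hM using IsNoetherianRing.induction_on_isQuotientEquivQuotientPrime R with
  | subsingleton N =>
    exact subsingleton_ext_of_isZero_left (ModuleCat.isZero_of_subsingleton _) L n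
  | quotient N p e =>
    refine (subsingleton_ext_congr_left (e.trans (Shrink.linearEquiv R _).symm).toModuleIso L n).2
      (h p ?_)
    rw [e.support_eq, Module.mem_support_iff_of_finite, Ideal.annihilator_quotient]
  | exact N₁ N₂ N₃ f g hf hg hfg h₁ h₃ =>
    rw [Module.support_of_exact hfg hf hg] at h
    exact subsingleton_ext_of_shortExact
      (S := ModuleCat.shortComplexOfCompEqZero f g hfg.linearMap_comp_eq_zero)
      { exact := ModuleCat.shortComplex_exact _ hfg
        mono_f := (ModuleCat.mono_iff_injective _).2 hf
        epi_g := (ModuleCat.epi_iff_surjective _).2 hg } L n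
      (h₁ fun p hp => h p (.inl hp)) (h₃ fun p hp => h p (.inr hp))

theorem subsingleton_ext_quotient_prime_of_forall_gt {L : ModuleCat.{v} R} [Module.Finite R L]
    {p : PrimeSpectrum R} {x : R} (hx : x ∈ Ring.jacobson R) (hxp : x ∉ p.asIdeal) {n : ℕ}
    (h : ∀ q > p, Subsingleton
      (Abelian.Ext (ModuleCat.of R (Shrink.{v} (R ⧸ q.asIdeal))) L (n + 1))) :
    Subsingleton (Abelian.Ext (ModuleCat.of R (Shrink.{v} (R ⧸ p.asIdeal))) L n) := by
  let e := Shrink.linearEquiv.{v} R (R ⧸ p.asIdeal)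
  have : Module.Finite R (Shrink.{v} (R ⧸ p.asIdeal)) := .equiv e.symm
  refine subsingleton_ext_of_quotSMulTop hx ((e.isSMulRegular_congr x).2
    (isSMulRegular_quotient_of_notMem_s10 hxp)) (subsingleton_ext_of_support fun q hq => h q ?_)
  rw [(QuotSMulTop.congr x e).support_eq] at hq
  exact lt_of_mem_support_quotSMulTop hxp hq

end NoetherianRing

section LocalRing

variable {R : Type u} [CommRing R] [IsLocalRing R]

theorem maximalIdeal_notMem_minimalPrimes (h : ringKrullDim R ≠ 0) :
    maximalIdeal R ∉ minimalPrimes R := by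
  rw [← maximalIdeal_height_eq_ringKrullDim] at h
  rw [← Ideal.height_eq_zero_iff]
  exact_mod_cast h

variable [IsNoetherianRing R] [Small.{v} R] {L : ModuleCat.{v} R} [Module.Finite R L] {d : ℕ}
  (h : ∀ i > d,
    Subsingleton (Abelian.Ext (ModuleCat.of R (Shrink.{v} (R ⧸ maximalIdeal R))) L i))
include h

theorem subsingleton_ext_quotient_prime_of_residueField (p : PrimeSpectrum R) {i : ℕ}
    (hi : i > d) :
    Subsingleton (Abelian.Ext (ModuleCat.of R (Shrink.{v} (R ⧸ p.asIdeal))) L i) := by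
  induction p using (InvImage.wf PrimeSpectrum.asIdeal
    (wellFounded_gt (α := Ideal R))).induction generalizing i with
  | h p ih =>
  obtain hp | hp := (le_maximalIdeal p.isPrime.ne_top).eq_or_lt
  · rw [hp]
    exact h i hi
  · obtain ⟨x, hx, hxp⟩ := SetLike.exists_of_lt hp
    exact subsingleton_ext_quotient_prime_of_forall_gt (ringJacobson_eq_maximalIdeal R ▸ hx) hxp
      fun q hq => ih q hq (Nat.lt_succ_of_lt hi)

variable (M : Type v) [AddCommGroup M] [Module R M] [Module.Finite R M]

theorem subsingleton_ext_of_residueField {i : ℕ} (hi : i > d) :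
    Subsingleton (Abelian.Ext (ModuleCat.of R M) L i) :=
  subsingleton_ext_of_support fun p _ => subsingleton_ext_quotient_prime_of_residueField h p hi

theorem subsingleton_ext_of_maximalIdeal_notMem_associatedPrimes
    (hM : maximalIdeal R ∉ associatedPrimes R M) :
    Subsingleton (Abelian.Ext (ModuleCat.of R M) L d) := by
  obtain ⟨x, hx, hreg⟩ : ∃ x ∈ maximalIdeal R, IsSMulRegular M x :=
    exists_mem_isSMulRegular_of_not_le fun p hp hle =>
      hM (((maximalIdeal.isMaximal R).eq_of_le hp.isPrime.ne_top hle) ▸ hp)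
  exact subsingleton_ext_of_quotSMulTop (ringJacobson_eq_maximalIdeal R ▸ hx) hreg
    (subsingleton_ext_of_residueField h (QuotSMulTop x M) d.lt_succ_self)

end LocalRing

theorem subsingleton_extM_iff {R : Type} [CommRing R] {M N : Type} [AddCommGroup M] [Module R M]
    [AddCommGroup N] [Module R N] {n : ℕ} : Subsingleton (extM R M N n) ↔
      Subsingleton (Abelian.Ext (ModuleCat.of R M) (ModuleCat.of R N) n) :=
  subsingleton_derivedExt_iff _ _ _

theorem ext_vanishing_dualizing_general (R : Type) [CommRing R] [IsNoetherianRing R]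
    [IsLocalRing R] (d : ℕ) (Ω : Type) [AddCommGroup Ω] [Module R Ω] [Module.Finite R Ω]
    (hΩ : ∀ i > d, Subsingleton (extM R (ResidueField R) Ω i))
    (M : Type) [AddCommGroup M] [Module R M] [Module.Finite R M] :
    (∀ i > d, Subsingleton (extM R M Ω i)) ∧
      (maximalIdeal R ∉ associatedPrimes R M → Subsingleton (extM R M Ω d)) := by
  simp only [subsingleton_extM_iff] at hΩ ⊢
  have hk (i : ℕ) (hi : i > d) : Subsingleton (Abelian.Ext
      (ModuleCat.of R (Shrink.{0} (R ⧸ maximalIdeal R))) (ModuleCat.of R Ω) i) :=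
    (subsingleton_ext_congr_left
      (Shrink.linearEquiv R (R ⧸ maximalIdeal R)).toModuleIso _ i).2 (hΩ i hi)
  exact ⟨fun i hi => subsingleton_ext_of_residueField hk M hi,
    subsingleton_ext_of_maximalIdeal_notMem_associatedPrimes hk M⟩

/-- Over a 1-dimensional Noetherian `S₁` local ring with dualizing module `Ω`:
`Ext^i_R(M, Ω) = 0` for all `i ≥ 2` for every finite `M`, and `Ext^1_R(M, Ω) = 0`
if `M` is moreover torsion free. -/
theorem ext_vanishing_dualizing (R : Type) [CommRing R] [IsNoetherianRing R] [IsLocalRing R]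
    (hdim : ringKrullDim R = 1)
    (hS1 : ∀ P ∈ associatedPrimes R R, P ∈ minimalPrimes R)
    (Ω : Type) [AddCommGroup Ω] [Module R Ω] [Module.Finite R Ω] (hΩ : IsDualizing1 R Ω)
    (M : Type) [AddCommGroup M] [Module R M] [Module.Finite R M] :
    (∀ i : ℕ, 2 ≤ i → Subsingleton (extM R M Ω i)) ∧
      ((∀ P ∈ associatedPrimes R M, P ∈ minimalPrimes R) →
        Subsingleton (extM R M Ω 1)) :=
  (ext_vanishing_dualizing_general R 1 Ω (fun i hi => hΩ.1 i hi.ne') M).imp_right fun h hM =>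
    h fun hm => maximalIdeal_notMem_minimalPrimes (by simp [hdim]) (hM _ hm)
end
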